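/- arXiv:2502.00141 — 3 statements merged into one kernel-verified Lean document; each statement's English description precedes it below -/
import Mathlib

section
/- The ideal class group of the ring of integers of K = ℚ(√−17) is a cyclic group of order 4. -/
open NumberField Module

section Quadratic
variable {A S : Type*} [CommRing A] [CommRing S] [Algebra A S] (b : Basis (Fin 2) A S)
  (h0 : b 0 = 1)
include h0

theorem exists_eq_add_mul_quadratic (x : S) :
    ∃ r s : A, x = algebraMap A S r + algebraMap A S s * b 1 := by
  refine ⟨b.repr x 0, b.repr x 1, ?_⟩
  conv_lhs => rw [← b.sum_repr x]
  simp [Fin.sum_univ_two, h0, Algebra.smul_def]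

theorem repr_add_mul_quadratic (r s : A) :
    b.repr (algebraMap A S r + algebraMap A S s * b 1) =
      Finsupp.single 0 r + Finsupp.single 1 s := by
  have : algebraMap A S r + algebraMap A S s * b 1 = r • b 0 + s • b 1 := by
    simp [h0, Algebra.smul_def]
  rw [this, map_add, map_smul, map_smul, b.repr_self, b.repr_self]
  simp

variable {d : A} (h1 : b 1 ^ 2 = algebraMap A S d)
include h1

theorem leftMulMatrix_quadratic (r s : A) :
    Algebra.leftMulMatrix b (algebraMap A S r + algebraMap A S s * b 1) =
      !![r, d * s; s, r] := by
  have e : (algebraMap A S r + algebraMap A S s * b 1) * b 1 =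
      algebraMap A S (d * s) + algebraMap A S r * b 1 := by
    rw [map_mul, ← h1]; ring
  ext i j
  rw [Algebra.leftMulMatrix_eq_repr_mul]
  fin_cases j
  · fin_cases i <;> simp [h0, repr_add_mul_quadratic b h0]
  · simp only [Fin.mk_one]
    rw [e, repr_add_mul_quadratic b h0]
    fin_cases i <;> simp

theorem norm_quadratic (r s : A) :
    Algebra.norm A (algebraMap A S r + algebraMap A S s * b 1) = r ^ 2 - d * s ^ 2 := by
  rw [Algebra.norm_eq_matrix_det b, leftMulMatrix_quadratic b h0 h1, Matrix.det_fin_two_of]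
  ring

theorem trace_quadratic (r s : A) :
    Algebra.trace A S (algebraMap A S r + algebraMap A S s * b 1) = 2 * r := by
  rw [Algebra.trace_eq_matrix_trace b, leftMulMatrix_quadratic b h0 h1, Matrix.trace_fin_two_of]
  ring

theorem discr_quadratic : Algebra.discr A b = 4 * d := by
  have h := trace_quadratic b h0 h1
  have t1 : Algebra.trace A S 1 = 2 := by simpa using h 1 0
  have tw : Algebra.trace A S (b 1) = 0 := by simpa using h 0 1
  have td : Algebra.trace A S (b 1 * b 1) = 2 * d := by
    rw [← sq, h1]; simpa using h d 0
  rw [Algebra.discr_def, Matrix.det_fin_two]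
  simp only [Algebra.traceMatrix_apply, Algebra.traceForm_apply, h0, one_mul, mul_one, t1, tw, td]
  ring

end Quadratic

theorem exists_int_eq_of_trace_norm {a b : ℚ} {t n : ℤ} (ht : (t : ℚ) = 2 * a)
    (hn : (n : ℚ) = a ^ 2 + 17 * b ^ 2) : ∃ r s : ℤ, a = r ∧ b = s := by
  have h17 : ∃ u : ℤ, (u : ℚ) = 34 * b := by
    have : IsIntegral ℤ (34 * b) := by
      refine IsIntegral.of_pow (n := 2) two_pos ?_
      have : (34 * b) ^ 2 = ((17 * (4 * n - t ^ 2) : ℤ) : ℚ) := by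
        push_cast; rw [ht, hn]; ring
      rw [this]; exact isIntegral_algebraMap (R := ℤ) (A := ℚ)
    obtain ⟨u, hu⟩ := IsIntegrallyClosed.isIntegral_iff.1 this
    exact ⟨u, by simpa using hu⟩
  obtain ⟨u, hu⟩ := h17
  have e : u ^ 2 = 17 * (4 * n - t ^ 2) := by
    have : (u : ℚ) ^ 2 = 17 * (4 * n - t ^ 2) := by rw [hu, ht, hn]; ring
    exact_mod_cast this
  obtain ⟨v, rfl⟩ : (17 : ℤ) ∣ u :=
    Int.Prime.dvd_pow' (n := u) (k := 2) (p := 17) (by norm_num) (by rw [e]; exact ⟨_, rfl⟩)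
  have e2 : t ^ 2 + 17 * v ^ 2 = 4 * n := by linarith
  have e3 : t % 2 = 0 ∧ v % 2 = 0 := by
    have e4 : (t ^ 2 + 17 * v ^ 2) % 4 = 0 := by omega
    rcases Int.emod_two_eq_zero_or_one t with h | h <;>
    rcases Int.emod_two_eq_zero_or_one v with h' | h'
    · exact ⟨h, h'⟩
    all_goals
      exfalso
      obtain ⟨x, hx⟩ : ∃ x, t = 2 * x + t % 2 := ⟨t / 2, by omega⟩
      obtain ⟨y, hy⟩ : ∃ y, v = 2 * y + v % 2 := ⟨v / 2, by omega⟩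
      rw [h] at hx; rw [h'] at hy
      subst hx hy
      ring_nf at e4
      omega
  obtain ⟨r, hr⟩ := Int.dvd_of_emod_eq_zero e3.1
  obtain ⟨s, hs⟩ := Int.dvd_of_emod_eq_zero e3.2
  refine ⟨r, s, ?_, ?_⟩
  · rw [hr] at ht; push_cast at ht; linarith
  · rw [hs] at hu; push_cast at hu; linarith

section Field
variable {K : Type*} [Field K] [NumberField K] {ω : K}
    (hω : ω ^ 2 = -17) (hK : Algebra.adjoin ℚ {ω} = ⊤)

include hω in
theorem linearIndependent_one_sqrt_neg_seventeen : LinearIndependent ℚ ![(1 : K), ω] := by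
  rw [LinearIndependent.pair_iff]
  intro s t h
  rw [Algebra.smul_def, Algebra.smul_def, mul_one] at h
  have h2 : s ^ 2 + 17 * t ^ 2 = 0 := by
    apply (algebraMap ℚ K).injective
    have : algebraMap ℚ K s = - (algebraMap ℚ K t * ω) := eq_neg_of_add_eq_zero_left h
    simp only [map_add, map_mul, map_pow, map_zero, this, map_ofNat]
    linear_combination (algebraMap ℚ K t) ^ 2 * hω
  constructor <;> nlinarith [sq_nonneg s, sq_nonneg t]

include hω hK in
theorem exists_basis_rat : ∃ b : Basis (Fin 2) ℚ K, b 0 = 1 ∧ b 1 = ω := by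
  have hs : ⊤ ≤ Submodule.span ℚ (Set.range ![(1 : K), ω]) := by
    rintro x -
    have hx : x ∈ Algebra.adjoin ℚ {ω} := hK ▸ Algebra.mem_top
    rw [Matrix.range_cons, Matrix.range_cons, Matrix.range_empty, Set.union_empty,
      Set.singleton_union]
    induction hx using Algebra.adjoin_induction with
    | mem x hx => exact Submodule.subset_span (by simp_all)
    | algebraMap r => exact Submodule.mem_span_pair.2 ⟨r, 0, by simp [Algebra.smul_def]⟩
    | add x y _ _ hx hy => exact add_mem hx hy
    | mul x y _ _ hx hy =>
      obtain ⟨a, b, rfl⟩ := Submodule.mem_span_pair.1 hx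
      obtain ⟨c, d, rfl⟩ := Submodule.mem_span_pair.1 hy
      refine Submodule.mem_span_pair.2 ⟨a * c - 17 * (b * d), a * d + b * c, ?_⟩
      simp only [Algebra.smul_def, map_sub, map_mul, map_add, map_ofNat]
      linear_combination -(algebraMap ℚ K b * algebraMap ℚ K d) * hω
  exact ⟨Basis.mk (linearIndependent_one_sqrt_neg_seventeen hω) hs, by simp, by simp⟩

include hω hK in
theorem exists_basis_int :
    ∃ b : Basis (Fin 2) ℤ (𝓞 K), b 0 = 1 ∧ b 1 ^ 2 = algebraMap ℤ (𝓞 K) (-17) := by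
  have hint : IsIntegral ℤ ω := by
    refine IsIntegral.of_pow (n := 2) two_pos ?_
    rw [hω]
    exact_mod_cast isIntegral_algebraMap (R := ℤ) (A := K) (x := -17)
  obtain ⟨θ, hθ⟩ : ∃ θ : 𝓞 K, (θ : K) = ω := ⟨⟨ω, hint⟩, rfl⟩
  have hli : LinearIndependent ℤ ![(1 : 𝓞 K), θ] := by
    rw [LinearIndependent.pair_iff]
    intro s t h
    have h2 : (s : ℚ) • (1 : K) + (t : ℚ) • ω = 0 := by
      have := congrArg (algebraMap (𝓞 K) K) h
      simp only [zsmul_eq_mul, mul_one, map_add, map_mul, map_intCast, map_zero, hθ] at this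
      simpa [Algebra.smul_def] using this
    have hQ := linearIndependent_one_sqrt_neg_seventeen hω
    rw [LinearIndependent.pair_iff] at hQ
    obtain ⟨hs, ht⟩ := hQ s t h2
    exact ⟨Int.cast_eq_zero.1 hs, Int.cast_eq_zero.1 ht⟩
  have hs : ⊤ ≤ Submodule.span ℤ (Set.range ![(1 : 𝓞 K), θ]) := by
    rintro x -
    rw [Matrix.range_cons, Matrix.range_cons, Matrix.range_empty, Set.union_empty,
      Set.singleton_union, Submodule.mem_span_pair]
    obtain ⟨b, b0, b1⟩ := exists_basis_rat hω hK
    have b1' : b 1 ^ 2 = algebraMap ℚ K (-17) := by rw [b1, hω]; simp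
    obtain ⟨r, s, hx⟩ := exists_eq_add_mul_quadratic b b0 (algebraMap (𝓞 K) K x)
    have ht := Algebra.isIntegral_trace (L := ℚ) (RingOfIntegers.isIntegral_coe x)
    have hn := Algebra.isIntegral_norm ℚ (RingOfIntegers.isIntegral_coe x)
    rw [hx, trace_quadratic b b0 b1'] at ht
    rw [hx, norm_quadratic b b0 b1'] at hn
    obtain ⟨t, ht⟩ := IsIntegrallyClosed.isIntegral_iff.1 ht
    obtain ⟨n, hn⟩ := IsIntegrallyClosed.isIntegral_iff.1 hn
    obtain ⟨u, v, rfl, rfl⟩ := exists_int_eq_of_trace_norm (a := r) (b := s) (t := t) (n := n)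
      (by simpa using ht) (by rw [eq_intCast] at hn; rw [hn]; ring)
    refine ⟨u, v, RingOfIntegers.coe_injective ?_⟩
    rw [hx, b1]
    simp [Algebra.smul_def, hθ]
  refine ⟨Basis.mk hli hs, by simp, ?_⟩
  apply RingOfIntegers.coe_injective
  rw [Basis.mk_apply, ← IsScalarTower.algebraMap_apply]
  simp [hθ, hω]

include hω hK in
theorem exists_ideal_absNorm_le_five (C : ClassGroup (𝓞 K)) :
    ∃ I : nonZeroDivisors (Ideal (𝓞 K)), ClassGroup.mk0 I = C ∧
      Ideal.absNorm (I : Ideal (𝓞 K)) ≤ 5 := by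
  obtain ⟨I, hI, h⟩ := exists_ideal_in_class_of_norm_le C
  refine ⟨I, hI, ?_⟩
  obtain ⟨b, b0, -⟩ := exists_basis_rat hω hK
  obtain ⟨B, B0, B1⟩ := exists_basis_int hω hK
  have hfr : finrank ℚ K = 2 := by rw [finrank_eq_card_basis b]; simp
  have hd : discr K = -68 := by
    rw [← discr_eq_discr K B, discr_quadratic B B0 B1]; norm_num
  have hc : InfinitePlace.nrComplexPlaces K ≤ 1 := by
    have := InfinitePlace.card_add_two_mul_card_eq_rank K
    omega
  rw [hfr, hd] at h
  have hpi : (1 : ℝ) ≤ 4 / Real.pi := by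
    rw [le_div_iff₀ Real.pi_pos, one_mul]; exact Real.pi_le_four
  have hpi2 : 4 / Real.pi ≤ 4 / 3.14 := by
    gcongr; exact Real.pi_gt_d2.le
  have h1 : (4 / Real.pi) ^ InfinitePlace.nrComplexPlaces K ≤ 4 / 3.14 :=
    (pow_le_pow_right₀ hpi hc).trans (by simpa using hpi2)
  have h2 : √|((-68 : ℤ) : ℝ)| ≤ 8.25 := by
    rw [Real.sqrt_le_left (by norm_num)]; norm_num
  have h3 : (Ideal.absNorm (I : Ideal (𝓞 K)) : ℝ) < 6 := by
    refine h.trans_lt ?_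
    calc _ ≤ (4 / 3.14 : ℝ) * ((2).factorial / 2 ^ 2 * 8.25) := by
          push_cast at h2 ⊢
          gcongr
      _ < 6 := by norm_num [Nat.factorial]
  have : Ideal.absNorm (I : Ideal (𝓞 K)) < 6 := by exact_mod_cast h3
  omega

end Field

theorem addOrderOf_mk_one_dvd_iff {R : Type*} [CommRing R] (I : Ideal R) (m : ℤ) :
    (addOrderOf (1 : R ⧸ I) : ℤ) ∣ m ↔ (m : R) ∈ I := by
  rw [addOrderOf_dvd_iff_zsmul_eq_zero, zsmul_one, ← map_intCast (Ideal.Quotient.mk I),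
    Ideal.Quotient.eq_zero_iff_mem]

theorem Ideal.eq_of_le_of_absNorm_eq {R : Type*} [CommRing R] [IsDedekindDomain R]
    [Module.Free ℤ R] {I J : Ideal R} (h : J ≤ I)
    (hJ : Ideal.absNorm J ≠ 0) (hn : Ideal.absNorm J = Ideal.absNorm I) : J = I := by
  obtain ⟨L, rfl⟩ := Ideal.dvd_iff_le.2 h
  rw [map_mul] at hn hJ
  have : Ideal.absNorm L = 1 := (mul_eq_left₀ (left_ne_zero_of_mul hJ)).1 hn
  rw [Ideal.absNorm_eq_one_iff.1 this, Ideal.mul_top]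

section Ideals
variable {R : Type*} [CommRing R] [IsDedekindDomain R] [Module.Free ℤ R]
  {θ : R} (hθ : θ ^ 2 = -17) (hrep : ∀ x : R, ∃ a b : ℤ, x = a + b * θ)

include hθ hrep in
theorem Ideal.eq_span_of_addOrderOf_eq_absNorm {I : Ideal R} (h0 : Ideal.absNorm I ≠ 0)
    (h : addOrderOf (1 : R ⧸ I) = Ideal.absNorm I) :
    ∃ c : ℕ, c < Ideal.absNorm I ∧ Ideal.absNorm I ∣ c ^ 2 + 17 ∧
      I = Ideal.span {(Ideal.absNorm I : R), θ - c} := by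
  set n := Ideal.absNorm I with hn
  have hcard : Nat.card (R ⧸ I) = n := rfl
  have : Finite (R ⧸ I) := Nat.finite_of_card_ne_zero (hcard ▸ h0)
  have hmem (m : ℤ) : (m : R) ∈ I ↔ (n : ℤ) ∣ m := by rw [← addOrderOf_mk_one_dvd_iff, h]
  have hz : (Ideal.Quotient.mk I θ) ∈ AddSubgroup.zmultiples (1 : R ⧸ I) := by
    rw [AddSubgroup.eq_top_of_card_eq (AddSubgroup.zmultiples (1 : R ⧸ I))
      (by rw [Nat.card_zmultiples, h, hcard])]
    trivial
  obtain ⟨c, hc, hcI⟩ : ∃ c : ℕ, c < n ∧ θ - c ∈ I := by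
    obtain ⟨k, hk⟩ := AddSubgroup.mem_zmultiples_iff.1 hz
    have hn0 : (n : ℤ) ≠ 0 := by exact_mod_cast h0
    have hp := Int.emod_nonneg k hn0
    have hl := Int.emod_lt_of_pos k (show (0 : ℤ) < n by omega)
    refine ⟨(k % n).toNat, by omega, ?_⟩
    have e : (((k % n).toNat : ℕ) : R) = k - n * (k / n : ℤ) := by
      have : (((k % n).toNat : ℕ) : ℤ) = k - n * (k / n) := by
        rw [Int.toNat_of_nonneg hp, Int.emod_def]
      exact_mod_cast congrArg (Int.cast : ℤ → R) this
    have e1 : θ - k ∈ I := by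
      rw [← Ideal.Quotient.eq_zero_iff_mem, map_sub, ← hk]
      simp
    rw [e, ← sub_add]
    exact add_mem e1 (I.mul_mem_right _ (Ideal.absNorm_mem I))
  refine ⟨c, hc, ?_, le_antisymm (fun x hx ↦ ?_) ?_⟩
  · have : ((-((c : ℤ) ^ 2 + 17) : ℤ) : R) ∈ I := by
      have : ((-((c : ℤ) ^ 2 + 17) : ℤ) : R) = (θ + c) * (θ - c) := by
        push_cast; linear_combination -hθ
      rw [this]
      exact I.mul_mem_left _ hcI
    rw [hmem, dvd_neg] at this
    exact_mod_cast this
  · obtain ⟨a, b, rfl⟩ := hrep x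
    have : ((a + b * c : ℤ) : R) ∈ I := by
      have : ((a + b * c : ℤ) : R) = (a + b * θ) - b * (θ - c) := by push_cast; ring
      rw [this]
      exact sub_mem hx (I.mul_mem_left _ hcI)
    obtain ⟨k, hk⟩ := (hmem _).1 this
    refine Ideal.mem_span_pair.2 ⟨k, b, ?_⟩
    have hk' := congrArg (Int.cast : ℤ → R) hk
    push_cast at hk'
    linear_combination -hk'
  · rw [Ideal.span_le]
    rintro x (rfl | rfl)
    exacts [Ideal.absNorm_mem I, hcI]

variable [Module.Finite ℤ R]

include hθ hrep in
theorem Ideal.eq_of_absNorm_le_five (hrank : finrank ℤ R = 2) {I : Ideal R} (h0 : I ≠ ⊥)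
    (h : Ideal.absNorm I ≤ 5) :
    I.IsPrincipal ∨ I = Ideal.span {2, θ - 1} ∨ I = Ideal.span {3, θ - 1} ∨
      I = Ideal.span {3, θ - 2} := by
  have hn0 : Ideal.absNorm I ≠ 0 := mt Ideal.absNorm_eq_zero_iff.1 h0
  have hdvd : addOrderOf (1 : R ⧸ I) ∣ Ideal.absNorm I := addOrderOf_dvd_natCard _
  have key := Ideal.eq_span_of_addOrderOf_eq_absNorm hθ hrep hn0
  have hone : addOrderOf (1 : R ⧸ I) = 1 → I = ⊤ := fun h ↦ by
    rw [Ideal.eq_top_iff_one]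
    simpa [h] using addOrderOf_mk_one_dvd_iff I 1
  have hprime : (Ideal.absNorm I).Prime → addOrderOf (1 : R ⧸ I) = Ideal.absNorm I := fun hp ↦
    ((Nat.dvd_prime hp).1 hdvd).resolve_left fun h ↦ hp.ne_one (Ideal.absNorm_eq_one_iff.2 (hone h))
  generalize hn : Ideal.absNorm I = n at *
  interval_cases n
  · exact absurd rfl hn0
  · left
    rw [Ideal.absNorm_eq_one_iff.1 hn]
    infer_instance
  · obtain ⟨c, hc, hd, hI⟩ := key (hprime Nat.prime_two)
    interval_cases c <;> simp at hd hI
    simp_all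
  · obtain ⟨c, hc, hd, hI⟩ := key (hprime Nat.prime_three)
    interval_cases c <;> simp at hd hI <;> simp_all
  · by_cases h2 : (2 : R) ∈ I
    · left
      refine ⟨2, ?_⟩
      refine (Ideal.eq_of_le_of_absNorm_eq ((Ideal.span_singleton_le_iff_mem I).2 h2) ?_ ?_).symm
      all_goals
        have h4 := Ideal.absNorm_span_natCast (S := R) 2
        rw [hrank, Nat.cast_ofNat] at h4
        simp only [h4, hn]
        norm_num
    · have h4 : addOrderOf (1 : R ⧸ I) = 4 := by
        obtain ⟨i, hi, h'⟩ := (Nat.dvd_prime_pow Nat.prime_two (m := 2)).1 hdvd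
        interval_cases i
        · exact absurd (hone h' ▸ trivial) h2
        · exact absurd (by simpa [h'] using addOrderOf_mk_one_dvd_iff I 2) h2
        · exact h'
      obtain ⟨c, hc, hd, -⟩ := key h4
      interval_cases c <;> simp at hd
  · obtain ⟨c, hc, hd, -⟩ := key (hprime Nat.prime_five)
    interval_cases c <;> simp at hd

variable (hind : ∀ a b : ℤ, (3 : R) ∣ a + b * θ → 3 ∣ a ∧ 3 ∣ b)
  (hnorm : ∀ a b : ℤ, Algebra.norm ℤ (a + b * θ : R) = a ^ 2 + 17 * b ^ 2)

include hθ hind in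
theorem absNorm_span_three (hrank : finrank ℤ R = 2) :
    Ideal.absNorm (Ideal.span {3, θ - 1} : Ideal R) = 3 := by
  have h9 : Ideal.absNorm (Ideal.span {3} : Ideal R) = 9 := by
    have := Ideal.absNorm_span_natCast (S := R) 3
    rw [hrank] at this
    exact_mod_cast this
  have hle : (Ideal.span {3} : Ideal R) ≤ Ideal.span {3, θ - 1} :=
    Ideal.span_mono (by simp)
  have hd := Ideal.absNorm_dvd_absNorm_of_le hle
  rw [h9] at hd
  obtain ⟨i, hi, h⟩ := (Nat.dvd_prime_pow Nat.prime_three (m := 2)).1 hd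
  interval_cases i
  · exfalso
    rw [pow_zero, Ideal.absNorm_eq_one_iff, Ideal.eq_top_iff_one, Ideal.mem_span_pair] at h
    obtain ⟨x, y, h⟩ := h
    have := hind 1 1 ⟨x * (1 + θ) - 6 * y, by push_cast; linear_combination -(1 + θ) * h + y * hθ⟩
    omega
  · simpa using h
  · exfalso
    have e := Ideal.eq_of_le_of_absNorm_eq hle (by simp [h9]) (by rw [h9, h]; norm_num)
    have : θ - 1 ∈ (Ideal.span {3} : Ideal R) := e ▸ Ideal.subset_span (by simp)
    rw [Ideal.mem_span_singleton] at this
    have := hind (-1) 1 (by simpa [add_comm, sub_eq_add_neg] using this)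
    omega

include hθ hrep hind hnorm in
theorem not_isPrincipal_span_three_pow (hrank : finrank ℤ R = 2) {k : ℕ} (hk0 : 0 < k)
    (hk : k < 4) : ¬ ((Ideal.span {3, θ - 1} : Ideal R) ^ k).IsPrincipal := by
  rintro ⟨g, hg⟩
  obtain ⟨a, b, rfl⟩ := hrep g
  have hN : a ^ 2 + 17 * b ^ 2 = 3 ^ k := by
    have := congrArg Ideal.absNorm hg
    rw [map_pow, absNorm_span_three hθ hind hrank, Ideal.submodule_span_eq,
      Ideal.absNorm_span_singleton, hnorm] at this
    have h2 := congrArg (Nat.cast : ℕ → ℤ) this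
    rw [Int.natCast_natAbs, abs_of_nonneg (by positivity)] at h2
    exact_mod_cast h2.symm
  have h27 : (3 : ℤ) ^ k ≤ 3 ^ 3 := pow_le_pow_right₀ (by norm_num) (by omega)
  have hb : b ^ 2 ≤ 1 := by nlinarith [sq_nonneg a]
  have hb1 : b ≤ 1 := by nlinarith
  have hb2 : -1 ≤ b := by nlinarith
  have ha1 : a ≤ 5 := by nlinarith [sq_nonneg b]
  have ha2 : -5 ≤ a := by nlinarith [sq_nonneg b]
  have hab : k = 2 ∧ 3 ∣ a ∧ b = 0 := by
    interval_cases k <;> interval_cases b <;> interval_cases a <;> omega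
  obtain ⟨rfl, ⟨c, rfl⟩, rfl⟩ := hab
  have hm : (θ - 1) ^ 2 ∈ (Ideal.span {3, θ - 1} : Ideal R) ^ 2 :=
    Ideal.pow_mem_pow (Ideal.subset_span (by simp)) 2
  rw [hg, Ideal.submodule_span_eq, Ideal.mem_span_singleton] at hm
  have h3 : (3 : R) ∣ ((-16 : ℤ) : R) + ((-2 : ℤ) : R) * θ := by
    have : ((-16 : ℤ) : R) + ((-2 : ℤ) : R) * θ = (θ - 1) ^ 2 := by
      push_cast; linear_combination -hθ
    rw [this]
    exact (Dvd.intro _ (by push_cast; ring)).trans hm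
  have := hind _ _ h3
  omega

include hθ hrep hind hnorm in
theorem isCyclic_classGroup_of_absNorm_le_five (hrank : finrank ℤ R = 2) [Finite (ClassGroup R)]
    (hM : ∀ C : ClassGroup R, ∃ I : nonZeroDivisors (Ideal R), ClassGroup.mk0 I = C ∧
      Ideal.absNorm (I : Ideal R) ≤ 5) :
    IsCyclic (ClassGroup R) ∧ Nat.card (ClassGroup R) = 4 := by
  classical
  have := Fintype.ofFinite (ClassGroup R)
  have hle : Nat.card (ClassGroup R) ≤ 4 := by
    let f : Ideal R → ClassGroup R := fun I ↦
      if h : I ∈ nonZeroDivisors (Ideal R) then ClassGroup.mk0 ⟨I, h⟩ else 1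
    have hf (I : nonZeroDivisors (Ideal R)) : f I = ClassGroup.mk0 I := dif_pos I.2
    have hsub : (Finset.univ : Finset (ClassGroup R)) ⊆ {1, f (Ideal.span {2, θ - 1}),
        f (Ideal.span {3, θ - 1}), f (Ideal.span {3, θ - 2})} := by
      rintro C -
      obtain ⟨I, rfl, hI⟩ := hM C
      rcases Ideal.eq_of_absNorm_le_five hθ hrep hrank (nonZeroDivisors.ne_zero I.2) hI
        with h | h | h | h
      · simp [(ClassGroup.mk0_eq_one_iff I.2).2 h]
      all_goals simp [← h, hf]
    rw [Nat.card_eq_fintype_card]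
    exact (Finset.card_le_card hsub).trans Finset.card_le_four
  have hQ : (Ideal.span {3, θ - 1} : Ideal R) ∈ nonZeroDivisors (Ideal R) := by
    rw [← Ideal.absNorm_ne_zero_iff_mem_nonZeroDivisors, absNorm_span_three hθ hind hrank]
    norm_num
  have hord : 4 ≤ orderOf (ClassGroup.mk0 ⟨_, hQ⟩) := by
    by_contra! hlt
    have h1 := pow_orderOf_eq_one (ClassGroup.mk0 ⟨_, hQ⟩)
    rw [← map_pow] at h1
    exact not_isPrincipal_span_three_pow hθ hrep hind hnorm hrank (orderOf_pos _) hlt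
      ((ClassGroup.mk0_eq_one_iff (pow_mem hQ _)).1 h1)
  have hle' := orderOf_le_card (x := ClassGroup.mk0 ⟨_, hQ⟩)
  exact ⟨isCyclic_of_orderOf_eq_card (ClassGroup.mk0 ⟨_, hQ⟩) (by omega), by omega⟩

end Ideals

/-- The ideal class group of the ring of integers of `K = ℚ(√−17)` is cyclic of order 4. -/
theorem classGroup_cyclic_of_order_four
    (K : Type*) [Field K] [NumberField K] (ω : K)
    (hω : ω ^ 2 = -17) (hK : Algebra.adjoin ℚ {ω} = ⊤) :
    IsCyclic (ClassGroup (𝓞 K)) ∧ Nat.card (ClassGroup (𝓞 K)) = 4 := by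
  obtain ⟨b, h0, h1⟩ := exists_basis_int hω hK
  have h3 (r s : ℤ) (h : (3 : 𝓞 K) ∣ r + s * b 1) : 3 ∣ r ∧ 3 ∣ s := by
    obtain ⟨x, hx⟩ := h
    obtain ⟨u, v, rfl⟩ := exists_eq_add_mul_quadratic b h0 x
    have e : algebraMap ℤ (𝓞 K) r + algebraMap ℤ (𝓞 K) s * b 1 =
        algebraMap ℤ (𝓞 K) (3 * u) + algebraMap ℤ (𝓞 K) (3 * v) * b 1 := by
      simp only [eq_intCast] at hx ⊢
      rw [hx]
      push_cast
      ring
    have e' := congrArg b.repr e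
    rw [repr_add_mul_quadratic b h0, repr_add_mul_quadratic b h0] at e'
    have e0 := DFunLike.congr_fun e' 0
    have e1 := DFunLike.congr_fun e' 1
    simp only [Finsupp.add_apply, Finsupp.single_apply] at e0 e1
    norm_num at e0 e1
    exact ⟨⟨u, e0⟩, ⟨v, e1⟩⟩
  refine isCyclic_classGroup_of_absNorm_le_five (θ := b 1) (by simpa using h1)
    (fun x ↦ by simpa using exists_eq_add_mul_quadratic b h0 x) h3
    (fun r s ↦ by simpa using norm_quadratic b h0 h1 r s)
    (by rw [Module.finrank_eq_card_basis b]; simp) (exists_ideal_absNorm_le_five hω hK)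
end

section
/- The ideal 𝔭 = (3, 1+ω) of 𝓞_K, where K = ℚ(√−17), is a prime ideal of absolute norm 3, and its ideal class has order 4 in the class group Cl(K); in particular, since Cl(K) has order 4, this class generates Cl(K). -/
open NumberField nonZeroDivisors

section QuadraticBasis

variable {R S : Type*} [CommRing R] [CommRing S] [Algebra R S] (b : Module.Basis (Fin 2) R S)
  {d : R}

theorem leftMulMatrix_of_basis_sq (h0 : b 0 = 1) (h1 : b 1 * b 1 = algebraMap R S d) (x y : R) :
    Algebra.leftMulMatrix b (algebraMap R S x + algebraMap R S y * b 1) = !![x, d * y; y, x] := by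
  have e1 : algebraMap R S x + algebraMap R S y * b 1 = x • b 0 + y • b 1 := by
    rw [h0, Algebra.smul_def, Algebra.smul_def, mul_one]
  have e2 : (algebraMap R S x + algebraMap R S y * b 1) * b 1 = (d * y) • b 0 + x • b 1 := by
    rw [h0, Algebra.smul_def, Algebra.smul_def, map_mul]
    linear_combination algebraMap R S y * h1
  ext i j
  rw [Algebra.leftMulMatrix_eq_repr_mul]
  fin_cases j
  · change b.repr (_ * b 0) i = _
    rw [h0, mul_one, e1]
    fin_cases i <;> simp
  · change b.repr (_ * b 1) i = _
    rw [e2]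
    fin_cases i <;> simp

theorem norm_of_basis_sq (h0 : b 0 = 1) (h1 : b 1 * b 1 = algebraMap R S d) (x y : R) :
    Algebra.norm R (algebraMap R S x + algebraMap R S y * b 1) = x ^ 2 - d * y ^ 2 := by
  rw [Algebra.norm_eq_matrix_det b, leftMulMatrix_of_basis_sq b h0 h1, Matrix.det_fin_two_of]
  ring

theorem trace_of_basis_sq (h0 : b 0 = 1) (h1 : b 1 * b 1 = algebraMap R S d) (x y : R) :
    Algebra.trace R S (algebraMap R S x + algebraMap R S y * b 1) = 2 * x := by
  rw [Algebra.trace_eq_matrix_trace b, leftMulMatrix_of_basis_sq b h0 h1, Matrix.trace_fin_two_of]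
  ring

theorem discr_of_basis_sq (h0 : b 0 = 1) (h1 : b 1 * b 1 = algebraMap R S d) :
    Algebra.discr R b = 4 * d := by
  have t00 : Algebra.trace R S (b 0 * b 0) = 2 := by
    simpa [h0] using trace_of_basis_sq b h0 h1 1 0
  have t1 : Algebra.trace R S (b 1) = 0 := by
    simpa using trace_of_basis_sq b h0 h1 0 1
  have t11 : Algebra.trace R S (b 1 * b 1) = 2 * d := by
    simpa [h1] using trace_of_basis_sq b h0 h1 d 0
  rw [Algebra.discr_def, Matrix.det_fin_two]
  simp only [Algebra.traceMatrix_apply, Algebra.traceForm_apply, t00, t11]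
  rw [h0, mul_one, one_mul, t1]
  ring

end QuadraticBasis

section Field

variable {K : Type*} [Field K] {ω : K}

theorem exists_eq_add_mul_of_adjoin_eq_top [Algebra ℚ K] {d : ℚ} (hω : ω ^ 2 = algebraMap ℚ K d)
    (hK : Algebra.adjoin ℚ {ω} = ⊤) (x : K) :
    ∃ r s : ℚ, x = algebraMap ℚ K r + algebraMap ℚ K s * ω := by
  have hx : x ∈ Algebra.adjoin ℚ {ω} := hK ▸ Algebra.mem_top
  induction hx using Algebra.adjoin_induction with
  | mem x hx => exact ⟨0, 1, by simpa using hx⟩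
  | algebraMap r => exact ⟨r, 0, by simp⟩
  | add x y _ _ hx hy =>
    obtain ⟨r, s, rfl⟩ := hx
    obtain ⟨t, u, rfl⟩ := hy
    exact ⟨r + t, s + u, by simp only [map_add]; ring⟩
  | mul x y _ _ hx hy =>
    obtain ⟨r, s, rfl⟩ := hx
    obtain ⟨t, u, rfl⟩ := hy
    refine ⟨r * t + d * (s * u), r * u + s * t, ?_⟩
    simp only [map_add, map_mul, ← hω]
    ring

theorem exists_basis_of_sq_eq_neg [Algebra ℚ K] {d : ℚ} (hd : d < 0)
    (hω : ω ^ 2 = algebraMap ℚ K d) (hK : Algebra.adjoin ℚ {ω} = ⊤) :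
    ∃ b : Module.Basis (Fin 2) ℚ K, b 0 = 1 ∧ b 1 = ω := by
  have hli : LinearIndependent ℚ ![(1 : K), ω] := by
    rw [LinearIndependent.pair_iff]
    intro s t h
    rw [Algebra.smul_def, Algebra.smul_def, mul_one] at h
    have h2 : algebraMap ℚ K (s ^ 2 - d * t ^ 2) = algebraMap ℚ K 0 := by
      simp only [map_sub, map_mul, map_pow, map_zero, ← hω]
      linear_combination (algebraMap ℚ K s - algebraMap ℚ K t * ω) * h
    have h3 := (algebraMap ℚ K).injective h2
    have ht : t = 0 := by
      by_contra ht
      have : 0 < t ^ 2 := by positivity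
      nlinarith [sq_nonneg s]
    subst ht
    exact ⟨by simpa using h3, rfl⟩
  refine ⟨Module.Basis.mk hli fun x _ ↦ ?_, by simp, by simp⟩
  obtain ⟨r, s, rfl⟩ := exists_eq_add_mul_of_adjoin_eq_top hω hK x
  rw [Matrix.range_cons, Matrix.range_cons, Matrix.range_empty, Set.union_empty,
    Set.singleton_union, Submodule.mem_span_pair]
  exact ⟨r, s, by rw [Algebra.smul_def, Algebra.smul_def, mul_one]⟩

end Field

theorem exists_int_of_quadratic_trace_norm {r s : ℚ} {m n k : ℤ} (hm : (m : ℚ) = 2 * r)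
    (hn : (n : ℚ) = 2 * (-17 * s)) (hk : (k : ℚ) = r ^ 2 - -17 * s ^ 2) :
    ∃ a b : ℤ, r = a ∧ s = b := by
  have h : 17 * m ^ 2 + n ^ 2 = 68 * k := by
    have : (17 * m ^ 2 + n ^ 2 : ℚ) = 68 * k := by rw [hm, hn, hk]; ring
    exact_mod_cast this
  have h17 : (17 : ℤ) ∣ n := by
    refine Int.Prime.dvd_pow' (p := 17) (n := n) (k := 2) (by norm_num) ⟨4 * k - m ^ 2, ?_⟩
    push_cast
    linarith
  obtain ⟨t, rfl⟩ := h17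
  have h4 : m ^ 2 + 17 * t ^ 2 = 4 * k := by linarith
  have key : 2 ∣ m ∧ 2 ∣ t := by
    rcases Int.even_or_odd' m with ⟨u, rfl | rfl⟩ <;> rcases Int.even_or_odd' t with ⟨v, rfl | rfl⟩
    · exact ⟨⟨u, rfl⟩, ⟨v, rfl⟩⟩
    all_goals ring_nf at h4; omega
  obtain ⟨⟨u, rfl⟩, ⟨v, rfl⟩⟩ := key
  push_cast at hm hn
  exact ⟨u, -v, by linarith, by push_cast; linarith⟩

theorem exists_int_eq_add_mul {K : Type*} [Field K] [NumberField K] {ω : K}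
    (hω : ω ^ 2 = -17) (hK : Algebra.adjoin ℚ {ω} = ⊤) {ζ : 𝓞 K}
    (hζ : algebraMap (𝓞 K) K ζ = ω) (x : 𝓞 K) :
    ∃ a b : ℤ, x = a + b * ζ := by
  have hω' : ω ^ 2 = algebraMap ℚ K (-17) := by simp [hω]
  obtain ⟨b, h0, h1⟩ := exists_basis_of_sq_eq_neg (by norm_num) hω' hK
  have h11 : b 1 * b 1 = algebraMap ℚ K (-17) := by rw [h1, ← sq, hω']
  obtain ⟨r, s, hx⟩ := exists_eq_add_mul_of_adjoin_eq_top hω' hK (x : K)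
  have hx' : algebraMap (𝓞 K) K x = algebraMap ℚ K r + algebraMap ℚ K s * ω := hx
  have hm : (Algebra.trace ℤ (𝓞 K) x : ℚ) = 2 * r := by
    rw [Algebra.coe_trace_int, hx, ← h1, trace_of_basis_sq b h0 h11]
  have hn : (Algebra.trace ℤ (𝓞 K) (x * ζ) : ℚ) = 2 * (-17 * s) := by
    rw [Algebra.coe_trace_int, ← trace_of_basis_sq b h0 h11 _ r]
    congr 1
    refine (map_mul (algebraMap (𝓞 K) K) x ζ).trans ?_
    rw [hx', hζ, map_mul, ← hω', h1]
    ring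
  have hk : (Algebra.norm ℤ x : ℚ) = r ^ 2 - -17 * s ^ 2 := by
    rw [Algebra.coe_norm_int, hx, ← h1, norm_of_basis_sq b h0 h11]
  obtain ⟨a, c, rfl, rfl⟩ := exists_int_of_quadratic_trace_norm hm hn hk
  refine ⟨a, c, RingOfIntegers.coe_injective ?_⟩
  rw [map_add, map_mul, hx', hζ]
  simp

theorem sq_eq_neg_seventeen {K : Type*} [Field K] {ω : K} (hω : ω ^ 2 = -17) {ζ : 𝓞 K}
    (hζ : algebraMap (𝓞 K) K ζ = ω) : ζ ^ 2 = -17 :=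
  RingOfIntegers.coe_injective (by rw [map_pow, hζ, hω, map_neg, map_ofNat])

theorem exists_integral_basis {K : Type*} [Field K] [NumberField K] {ω : K}
    (hω : ω ^ 2 = -17) (hK : Algebra.adjoin ℚ {ω} = ⊤) {ζ : 𝓞 K}
    (hζ : algebraMap (𝓞 K) K ζ = ω) :
    ∃ b : Module.Basis (Fin 2) ℤ (𝓞 K), b 0 = 1 ∧ b 1 = ζ := by
  have hζ2 : ζ ^ 2 = -17 := sq_eq_neg_seventeen hω hζ
  have hli : LinearIndependent ℤ ![(1 : 𝓞 K), ζ] := by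
    rw [LinearIndependent.pair_iff]
    intro s t h
    simp only [zsmul_eq_mul, mul_one] at h
    have h2 : ((s ^ 2 + 17 * t ^ 2 : ℤ) : 𝓞 K) = 0 := by
      push_cast
      linear_combination (s - t * ζ) * h + t ^ 2 * hζ2
    have h3 : s ^ 2 + 17 * t ^ 2 = 0 := by exact_mod_cast h2
    constructor <;> nlinarith
  refine ⟨Module.Basis.mk hli fun x _ ↦ ?_, by simp, by simp⟩
  obtain ⟨r, s, rfl⟩ := exists_int_eq_add_mul hω hK hζ x
  rw [Matrix.range_cons, Matrix.range_cons, Matrix.range_empty, Set.union_empty,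
    Set.singleton_union, Submodule.mem_span_pair]
  exact ⟨r, s, by simp⟩

theorem absNorm_eq_of_int_surjective {S : Type*} [CommRing S] [IsDedekindDomain S] [Module.Free ℤ S]
    {I : Ideal S} (hI : I ≠ ⊤) {p : ℕ} (hp : p.Prime) (hpI : (p : S) ∈ I)
    (h : ∀ x : S, ∃ a : ℤ, x - a ∈ I) : I.IsMaximal ∧ Ideal.absNorm I = p := by
  have hsurj : Function.Surjective (Int.castRingHom (S ⧸ I)) := by
    intro x
    obtain ⟨x, rfl⟩ := Ideal.Quotient.mk_surjective x
    obtain ⟨a, ha⟩ := h x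
    refine ⟨a, ?_⟩
    rw [eq_intCast, ← map_intCast (Ideal.Quotient.mk I)]
    exact (Ideal.Quotient.eq.mpr ha).symm
  have : Nontrivial (S ⧸ I) := Ideal.Quotient.nontrivial_iff.mpr hI
  have hmax : (Ideal.span {(p : ℤ)}).IsMaximal :=
    PrincipalIdealRing.isMaximal_of_irreducible (Nat.prime_iff_prime_int.mp hp).irreducible
  have hker : Ideal.span {(p : ℤ)} = RingHom.ker (Int.castRingHom (S ⧸ I)) := by
    refine hmax.eq_of_le (RingHom.ker_ne_top _) ?_
    rw [Ideal.span_singleton_le_iff_mem, RingHom.mem_ker, eq_intCast, Int.cast_natCast,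
      ← map_natCast (Ideal.Quotient.mk I)]
    exact Ideal.Quotient.eq_zero_iff_mem.mpr hpI
  have e := (Ideal.quotEquivOfEq hker).trans (RingHom.quotientKerEquivOfSurjective hsurj)
  constructor
  · exact Ideal.Quotient.maximal_of_isField _
      (e.symm.toMulEquiv.isField ((Ideal.Quotient.maximal_ideal_iff_isField_quotient _).mp hmax))
  · rw [Ideal.absNorm_apply, Submodule.cardQuot_apply, ← Nat.card_congr e.toEquiv]
    exact Int.card_ideal_quot p

theorem ClassGroup.mk0_mul_mk0_eq_one {R : Type*} [CommRing R] [IsDedekindDomain R]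
    {I J : Ideal R} (hI : I ∈ (Ideal R)⁰) (hJ : J ∈ (Ideal R)⁰) {x : R}
    (h : I * J = Ideal.span {x}) : ClassGroup.mk0 ⟨I, hI⟩ * ClassGroup.mk0 ⟨J, hJ⟩ = 1 := by
  rw [← map_mul, ClassGroup.mk0_eq_one_iff]
  exact ⟨x, h⟩

section SqrtNegSeventeen

variable {S : Type*} [CommRing S] {ζ : S}

theorem mem_span_quadruple {a b c d x : S} (p q r s : S)
    (h : p * a + q * b + r * c + s * d = x) : x ∈ Ideal.span {a, b, c, d} := by
  simp only [Ideal.mem_span_insert, Ideal.mem_span_singleton]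
  exact ⟨p, _, ⟨q, _, ⟨r, _, ⟨s, rfl⟩, rfl⟩, rfl⟩, by rw [← h]; ring⟩

theorem span_three_sq (hζ : ζ ^ 2 = -17) :
    Ideal.span {3, 1 + ζ} ^ 2 = Ideal.span {9, 1 + ζ} := by
  rw [sq, Ideal.span_pair_mul_span_pair]
  apply le_antisymm <;> rw [Ideal.span_le]
  · rintro x (rfl | rfl | rfl | rfl) <;> rw [SetLike.mem_coe, Ideal.mem_span_pair]
    · exact ⟨1, 0, by ring⟩
    · exact ⟨0, 3, by ring⟩
    · exact ⟨0, 3, by ring⟩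
    · exact ⟨0, 1 + ζ, by ring⟩
  · rintro x (rfl | rfl)
    · exact mem_span_quadruple 1 0 0 0 (by ring)
    · exact mem_span_quadruple (-2) 1 0 (-1) (by linear_combination -hζ)

theorem span_nine_sq (hζ : ζ ^ 2 = -17) :
    Ideal.span {9, 1 + ζ} ^ 2 = Ideal.span {8 - ζ} := by
  rw [sq, Ideal.span_pair_mul_span_pair]
  apply le_antisymm
  · rw [Ideal.span_le]
    rintro x (rfl | rfl | rfl | rfl) <;> rw [SetLike.mem_coe, Ideal.mem_span_singleton]
    · exact ⟨8 + ζ, by linear_combination hζ⟩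
    · exact ⟨ζ - 1, by linear_combination hζ⟩
    · exact ⟨ζ - 1, by linear_combination hζ⟩
    · exact ⟨-2, by linear_combination hζ⟩
  · rw [Ideal.span_singleton_le_iff_mem]
    exact mem_span_quadruple 1 (-1) 0 4 (by linear_combination 4 * hζ)

theorem span_nine_mul_span_two (hζ : ζ ^ 2 = -17) :
    Ideal.span {9, 1 + ζ} * Ideal.span {2, 1 + ζ} = Ideal.span {1 + ζ} := by
  rw [Ideal.span_pair_mul_span_pair]
  apply le_antisymm
  · rw [Ideal.span_le]
    rintro x (rfl | rfl | rfl | rfl) <;> rw [SetLike.mem_coe, Ideal.mem_span_singleton]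
    · exact ⟨1 - ζ, by linear_combination hζ⟩
    · exact ⟨9, by ring⟩
    · exact ⟨2, by ring⟩
    · exact ⟨1 + ζ, by ring⟩
  · rw [Ideal.span_singleton_le_iff_mem]
    exact mem_span_quadruple 0 1 (-4) 0 (by ring)

theorem span_three_mul_span_three_conj (hζ : ζ ^ 2 = -17) :
    Ideal.span {3, 1 + ζ} * Ideal.span {3, 1 - ζ} = Ideal.span {3} := by
  rw [Ideal.span_pair_mul_span_pair]
  apply le_antisymm
  · rw [Ideal.span_le]
    rintro x (rfl | rfl | rfl | rfl) <;> rw [SetLike.mem_coe, Ideal.mem_span_singleton]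
    · exact ⟨3, by ring⟩
    · exact ⟨1 - ζ, by ring⟩
    · exact ⟨1 + ζ, by ring⟩
    · exact ⟨6, by linear_combination -hζ⟩
  · rw [Ideal.span_singleton_le_iff_mem]
    exact mem_span_quadruple 1 (-1) (-1) 0 (by ring)

theorem intCast_add_mul_inj [IsDomain S] [CharZero S] (hζ : ζ ^ 2 = -17) {a b c d : ℤ}
    (h : (a + b * ζ : S) = c + d * ζ) : a = c ∧ b = d := by
  have h2 : (((a - c) ^ 2 + 17 * (b - d) ^ 2 : ℤ) : S) = 0 := by
    push_cast
    linear_combination (a - c - (b - d) * ζ) * h + (b - d) ^ 2 * hζ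
  have h3 : (a - c) ^ 2 + 17 * (b - d) ^ 2 = 0 := by exact_mod_cast h2
  constructor <;> nlinarith

theorem isMaximal_absNorm_span_pair [IsDedekindDomain S] [CharZero S] [Module.Free ℤ S]
    (hζ : ζ ^ 2 = -17) (hS : ∀ x : S, ∃ a b : ℤ, x = a + b * ζ) {p : ℕ} (hp : p.Prime)
    (hp18 : p ∣ 18) {e : ℤ} (he : e ^ 2 = 1) :
    (Ideal.span {(p : S), 1 + e * ζ}).IsMaximal ∧
      Ideal.absNorm (Ideal.span {(p : S), 1 + e * ζ}) = p := by
  have heS : (e : S) ^ 2 = 1 := by exact_mod_cast congrArg (Int.cast (R := S)) he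
  refine absNorm_eq_of_int_surjective ?_ hp (Ideal.subset_span (by simp)) fun x ↦ ?_
  · rw [Ne, Ideal.eq_top_iff_one, Ideal.mem_span_pair]
    rintro ⟨x, y, h⟩
    obtain ⟨a, b, rfl⟩ := hS x
    obtain ⟨c, d, rfl⟩ := hS y
    have h' : (((a * p + c - 17 * e * d : ℤ) : S) + ((b * p + e * c + d : ℤ) : S) * ζ) =
        (1 : ℤ) + (0 : ℤ) * ζ := by
      push_cast
      linear_combination h - d * e * hζ
    obtain ⟨h1, h2⟩ := intCast_add_mul_inj hζ h'
    obtain ⟨q, hq⟩ := hp18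
    have hq' : (18 : ℤ) = p * q := by exact_mod_cast hq
    have : (p : ℤ) ∣ 1 := ⟨a - e * b - q * e * d, by
      linear_combination (-1 : ℤ) * h1 + e * h2 - c * he - e * d * hq'⟩
    exact hp.one_lt.ne' (by simpa using Int.eq_one_of_dvd_one (by positivity) this)
  · obtain ⟨a, b, rfl⟩ := hS x
    refine ⟨a - b * e, Ideal.mem_span_pair.mpr ⟨0, b * e, ?_⟩⟩
    push_cast
    linear_combination b * ζ * heS

theorem absNorm_ne_five [IsDedekindDomain S] [Module.Free ℤ S] (hζ : ζ ^ 2 = -17)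
    {I : Ideal S} : Ideal.absNorm I ≠ 5 := by
  intro h
  rw [Ideal.absNorm_apply, Submodule.cardQuot_apply] at h
  have : Finite (S ⧸ I) := Nat.finite_of_card_ne_zero (by omega)
  have := Fintype.ofFinite (S ⧸ I)
  rw [Nat.card_eq_fintype_card] at h
  let f := (ZMod.ringEquivOfPrime (S ⧸ I) (by norm_num : Nat.Prime 5) h).symm
  have h1 : f (Ideal.Quotient.mk I ζ) ^ 2 = -17 := by
    rw [← map_pow, ← map_pow, hζ, map_neg, map_neg, map_ofNat, map_ofNat]
  generalize f (Ideal.Quotient.mk I ζ) = z at h1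
  revert z
  decide

theorem eq_span_of_isPrime_of_absNorm_le [IsDedekindDomain S] [CharZero S] [Module.Free ℤ S]
    (hζ : ζ ^ 2 = -17) (hS : ∀ x : S, ∃ a b : ℤ, x = a + b * ζ) {I : Ideal S} (hI : I.IsPrime)
    (hI0 : Ideal.absNorm I ≠ 0) (hI5 : Ideal.absNorm I ≤ 5) :
    I = Ideal.span {2, 1 + ζ} ∨ I = Ideal.span {3, 1 + ζ} ∨ I = Ideal.span {3, 1 - ζ} := by
  have hmem := Ideal.absNorm_mem I
  have of_two (h2 : (2 : S) ∈ I) : I = Ideal.span {2, 1 + ζ} := by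
    have hmax := (isMaximal_absNorm_span_pair hζ hS Nat.prime_two (by norm_num)
      (e := 1) (by norm_num)).1
    simp only [Nat.cast_ofNat, Int.cast_one, one_mul] at hmax
    refine (hmax.eq_of_le hI.ne_top (Ideal.span_le.mpr ?_)).symm
    rintro x (rfl | rfl)
    · exact h2
    · refine hI.mem_of_pow_mem 2 ?_
      convert I.mul_mem_right (ζ - 8) h2 using 1
      linear_combination hζ
  have of_three (h3 : (3 : S) ∈ I) : I = Ideal.span {3, 1 + ζ} ∨ I = Ideal.span {3, 1 - ζ} := by
    have h18 : (1 + ζ) * (1 - ζ) ∈ I := by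
      convert I.mul_mem_right 6 h3 using 1
      linear_combination -hζ
    refine (hI.mem_or_mem h18).imp (fun h ↦ ?_) (fun h ↦ ?_)
    · have hmax := (isMaximal_absNorm_span_pair hζ hS Nat.prime_three (by norm_num)
        (e := 1) (by norm_num)).1
      simp only [Nat.cast_ofNat, Int.cast_one, one_mul] at hmax
      refine (hmax.eq_of_le hI.ne_top (Ideal.span_le.mpr ?_)).symm
      rintro x (rfl | rfl) <;> assumption
    · have hmax := (isMaximal_absNorm_span_pair hζ hS Nat.prime_three (by norm_num)
        (e := -1) (by norm_num)).1
      simp only [Nat.cast_ofNat, Int.cast_neg, Int.cast_one, neg_mul, one_mul,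
        ← sub_eq_add_neg] at hmax
      refine (hmax.eq_of_le hI.ne_top (Ideal.span_le.mpr ?_)).symm
      rintro x (rfl | rfl) <;> assumption
  have h5 := absNorm_ne_five hζ (I := I)
  have h1 : Ideal.absNorm I ≠ 1 := mt Ideal.absNorm_eq_one_iff.mp hI.ne_top
  generalize Ideal.absNorm I = n at *
  interval_cases n
  · contradiction
  · contradiction
  · exact .inl (of_two (by simpa using hmem))
  · exact .inr (of_three (by simpa using hmem))
  · refine .inl (of_two (hI.mem_of_pow_mem 2 ?_))
    convert hmem using 1
    norm_num
  · contradiction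

/-- The square of the class of `(3, 1 + ζ)` is not trivial: a generator of `(9, 1 + ζ)` would have
norm `9`, hence be `± 3`, which does not divide `1 + ζ`. -/
theorem not_isPrincipal_span_nine [IsDedekindDomain S] [CharZero S]
    (b : Module.Basis (Fin 2) ℤ S) (h0 : b 0 = 1) (h1 : b 1 = ζ)
    (hζ : ζ ^ 2 = -17) (hS : ∀ x : S, ∃ a b : ℤ, x = a + b * ζ) :
    ¬ (Ideal.span {9, 1 + ζ}).IsPrincipal := by
  have := Module.Free.of_basis b
  have := Module.Finite.of_basis b
  rintro ⟨x, hx⟩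
  rw [Ideal.submodule_span_eq] at hx
  have hP := (isMaximal_absNorm_span_pair hζ hS Nat.prime_three (by norm_num)
    (e := 1) (by norm_num)).2
  simp only [Nat.cast_ofNat, Int.cast_one, one_mul] at hP
  have hN : Ideal.absNorm (Ideal.span {x}) = 9 := by
    rw [← hx, ← span_three_sq hζ, map_pow, hP]
    norm_num
  obtain ⟨r, s, rfl⟩ := hS x
  have hnorm := norm_of_basis_sq b (d := -17) h0
    (by rw [h1, ← sq, hζ]; simp) r s
  rw [h1] at hnorm
  simp only [algebraMap_int_eq, eq_intCast] at hnorm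
  rw [Ideal.absNorm_span_singleton, hnorm] at hN
  have hN' : r ^ 2 + 17 * s ^ 2 = 9 := by
    have : 0 ≤ r ^ 2 - -17 * s ^ 2 := by nlinarith [sq_nonneg r, sq_nonneg s]
    omega
  have hs : s = 0 := by
    by_contra hs
    have : 0 < s ^ 2 := by positivity
    nlinarith [sq_nonneg r]
  subst hs
  have hmem : 1 + ζ ∈ Ideal.span {(r + (0 : ℤ) * ζ : S)} :=
    hx ▸ Ideal.subset_span (by simp)
  obtain ⟨y, hy⟩ := Ideal.mem_span_singleton.mp hmem
  obtain ⟨u, v, rfl⟩ := hS y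
  have hu : ((1 : ℤ) + (1 : ℤ) * ζ : S) = (r * u : ℤ) + (r * v : ℤ) * ζ := by
    push_cast at hy ⊢
    linear_combination hy
  have hr := Int.isUnit_iff.mp (IsUnit.of_mul_eq_one u (intCast_add_mul_inj hζ hu).1.symm)
  rcases hr with rfl | rfl <;> norm_num at hN'

end SqrtNegSeventeen

theorem minkowskiBound_lt_six {K : Type*} [Field K] [NumberField K]
    (hrank : Module.finrank ℚ K = 2) (hdiscr : discr K = -68) :
    (4 / Real.pi) ^ InfinitePlace.nrComplexPlaces K *
      ((Module.finrank ℚ K).factorial / (Module.finrank ℚ K) ^ (Module.finrank ℚ K) *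
        √|(discr K : ℝ)|) < 6 := by
  have hc : InfinitePlace.nrComplexPlaces K ≤ 1 := by
    have := InfinitePlace.card_add_two_mul_card_eq_rank K
    omega
  have hpi : (4 / Real.pi) ^ InfinitePlace.nrComplexPlaces K ≤ 4 / 3 := by
    calc (4 / Real.pi) ^ InfinitePlace.nrComplexPlaces K ≤ (4 / 3) ^ 1 := by
          refine (pow_le_pow_left₀ (by positivity) ?_ _).trans
            (pow_le_pow_right₀ (by norm_num) hc)
          gcongr
          exact Real.pi_gt_three.le
      _ = 4 / 3 := by norm_num
  have hsqrt : √(68 : ℝ) < 9 := by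
    rw [Real.sqrt_lt' (by norm_num)]
    norm_num
  rw [hrank, hdiscr]
  calc _ ≤ (4 / 3 : ℝ) * ((Nat.factorial 2) / (2 : ℕ) ^ 2 * √|((-68 : ℤ) : ℝ)|) := by gcongr
    _ = 2 / 3 * √68 := by norm_num [Nat.factorial]; ring
    _ < 6 := by linarith

theorem ClassGroup.mk0_mem_of_absNorm_le {R : Type*} [CommRing R] [IsDedekindDomain R]
    [Module.Free ℤ R] [Module.Finite ℤ R] [CharZero R]
    (H : Subgroup (ClassGroup R)) (n : ℕ)
    (h : ∀ (I : Ideal R) (hI : I ∈ (Ideal R)⁰), I.IsPrime → Ideal.absNorm I ≤ n →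
      ClassGroup.mk0 ⟨I, hI⟩ ∈ H) (I : Ideal R) (hI : I ∈ (Ideal R)⁰)
    (hn : Ideal.absNorm I ≤ n) : ClassGroup.mk0 ⟨I, hI⟩ ∈ H := by
  induction I using UniqueFactorizationMonoid.induction_on_prime with
  | h₁ => exact absurd rfl (nonZeroDivisors.ne_zero hI)
  | h₂ I hu =>
    have : (⟨I, hI⟩ : (Ideal R)⁰) = 1 := Subtype.ext (by simpa using hu)
    rw [this, map_one]
    exact H.one_mem
  | h₃ I p hI0 hp ih =>
    have hp' := mem_nonZeroDivisors_of_ne_zero hp.ne_zero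
    have hI' := mem_nonZeroDivisors_of_ne_zero hI0
    rw [map_mul] at hn
    have hpn : 0 < Ideal.absNorm p := Ideal.absNorm_pos_of_nonZeroDivisors ⟨p, hp'⟩
    have hIn : 0 < Ideal.absNorm I := Ideal.absNorm_pos_of_nonZeroDivisors ⟨I, hI'⟩
    have : (⟨p * I, hI⟩ : (Ideal R)⁰) = ⟨p, hp'⟩ * ⟨I, hI'⟩ := rfl
    rw [this, map_mul]
    exact H.mul_mem (h p hp' (Ideal.isPrime_of_prime hp) ((Nat.le_mul_of_pos_right _ hIn).trans hn))
      (ih hI' ((Nat.le_mul_of_pos_left _ hpn).trans hn))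

/-- The ideal `(3, 1+ω)` of `𝓞_K`, `K = ℚ(√−17)`, is prime of absolute norm `3`, and its
ideal class has order `4` in the class group; in particular it generates the class group. -/
theorem ideal_three_one_add_omega_generates_classGroup
    (K : Type*) [Field K] [NumberField K] (ω : K)
    (hω : ω ^ 2 = -17) (hK : Algebra.adjoin ℚ {ω} = ⊤)
    (ζ : 𝓞 K) (hζ : (ζ : K) = ω)
    (P : Ideal (𝓞 K)) (hP : P = Ideal.span {(3 : 𝓞 K), 1 + ζ})
    (hP0 : P ∈ (Ideal (𝓞 K))⁰) :
    P.IsPrime ∧ Ideal.absNorm P = 3 ∧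
      orderOf (ClassGroup.mk0 ⟨P, hP0⟩) = 4 ∧
      ∀ x : ClassGroup (𝓞 K), x ∈ Subgroup.zpowers (ClassGroup.mk0 ⟨P, hP0⟩) := by
  have hζ2 := sq_eq_neg_seventeen hω hζ
  have hS := exists_int_eq_add_mul hω hK hζ
  obtain ⟨b, h0, h1⟩ := exists_integral_basis hω hK hζ
  obtain ⟨hmax, hnorm⟩ := isMaximal_absNorm_span_pair hζ2 hS Nat.prime_three (by norm_num)
    (e := 1) (by norm_num)
  simp only [Nat.cast_ofNat, Int.cast_one, one_mul, ← hP] at hmax hnorm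
  have hP2 : P ^ 2 = Ideal.span {9, 1 + ζ} := hP ▸ span_three_sq hζ2
  refine ⟨hmax.isPrime, hnorm, ?_, fun x ↦ ?_⟩
  · refine orderOf_eq_prime_pow (p := 2) (n := 1) ?_ ?_
    · rw [← map_pow, ClassGroup.mk0_eq_one_iff]
      change ¬ (P ^ 2).IsPrincipal
      rw [hP2]
      exact not_isPrincipal_span_nine b h0 h1 hζ2 hS
    · rw [← map_pow, ClassGroup.mk0_eq_one_iff]
      change (P ^ 4).IsPrincipal
      rw [pow_mul P 2 2, hP2, span_nine_sq hζ2]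
      exact ⟨_, rfl⟩
  · have hrank : Module.finrank ℚ K = 2 := by
      rw [← RingOfIntegers.rank K, Module.finrank_eq_card_basis b, Fintype.card_fin]
    have hdiscr : discr K = -68 := by
      rw [← discr_eq_discr K b, discr_of_basis_sq b (d := -17) h0 (by rw [h1, ← sq, hζ2]; simp)]
      norm_num
    obtain ⟨⟨I, hI⟩, rfl, hle⟩ := exists_ideal_in_class_of_norm_le x
    have hI5 : Ideal.absNorm I ≤ 5 := by
      have := hle.trans_lt (by exact_mod_cast minkowskiBound_lt_six hrank hdiscr)
      exact Nat.le_of_lt_succ (by exact_mod_cast this)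
    refine ClassGroup.mk0_mem_of_absNorm_le _ 5 (fun J hJ hprime hJ5 ↦ ?_) I hI hI5
    rcases eq_span_of_isPrime_of_absNorm_le hζ2 hS hprime
      (Ideal.absNorm_pos_of_nonZeroDivisors ⟨J, hJ⟩).ne' hJ5 with h | h | h
    · have := ClassGroup.mk0_mul_mk0_eq_one (pow_mem hP0 2) hJ
        (by rw [hP2, h, span_nine_mul_span_two hζ2])
      rw [eq_inv_of_mul_eq_one_right this, ← SubmonoidClass.mk_pow P hP0, map_pow]
      exact inv_mem (pow_mem (Subgroup.mem_zpowers _) 2)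
    · subst h hP
      exact Subgroup.mem_zpowers _
    · have := ClassGroup.mk0_mul_mk0_eq_one hP0 hJ
        (by rw [hP, h, span_three_mul_span_three_conj hζ2])
      rw [eq_inv_of_mul_eq_one_right this]
      exact inv_mem (Subgroup.mem_zpowers _)
end

section
/- Let p be an odd rational prime with p ≠ 17. There exists a prime ideal 𝔭 of 𝓞_K above p (i.e., with p ∈ 𝔭) whose ideal class has order 4 in Cl(K) if and only if p ≡ 3 (mod 4) and p mod 17 ∈ {3, 5, 6, 7, 10, 11, 12, 14}. -/
open NumberField nonZeroDivisors

namespace SqrtNegSeventeen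

/-- A positive definite form `A x² + 2 B x y + C y²` with `A C - B² = 17` represents one of
`1, 2, 3, 4`. -/
theorem exists_form_value_le_four (A : ℕ) :
    ∀ B C : ℤ, 0 < A → A * C - B ^ 2 = 17 →
      ∃ x y : ℤ, 0 < A * x ^ 2 + 2 * B * x * y + C * y ^ 2 ∧
        A * x ^ 2 + 2 * B * x * y + C * y ^ 2 ≤ 4 := by
  induction A using Nat.strong_induction_on with
  | _ A ih =>
    intro B C hA h
    by_cases hA4 : A ≤ 4
    · exact ⟨1, 0, by simpa using hA, by simpa using hA4⟩
    obtain ⟨t, B', rfl, hlo, hhi⟩ : ∃ t B' : ℤ, B = A * t + B' ∧ -A ≤ 2 * B' ∧ 2 * B' ≤ A := by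
      refine ⟨(2 * B + A) / (2 * A), B - A * ((2 * B + A) / (2 * A)), by ring, ?_, ?_⟩
      · have := Int.mul_ediv_self_le (x := 2 * B + A) (k := 2 * A) (by omega)
        linarith
      · have := Int.lt_mul_ediv_self_add (x := 2 * B + A) (k := 2 * A) (by omega)
        linarith
    push Not at hA4
    have hA5 : (5 : ℤ) ≤ A := by exact_mod_cast hA4
    set C' : ℤ := C - 2 * t * B' - A * t ^ 2 with hC'
    have h' : A * C' - B' ^ 2 = 17 := by rw [← h, hC']; ring
    have hC'pos : 0 < C' := by
      by_contra hneg
      nlinarith [sq_nonneg B']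
    have hC'lt : C' < A := by
      by_contra hge
      nlinarith [mul_nonneg (sub_nonneg.2 hlo) (sub_nonneg.2 hhi)]
    obtain ⟨n, hn⟩ := Int.eq_ofNat_of_zero_le hC'pos.le
    obtain ⟨x, y, hpos, hle⟩ := ih n (by omega) (-B') A (by omega) (by rw [← hn, ← h']; ring)
    have hval : A * (y + t * x) ^ 2 + 2 * (A * t + B') * (y + t * x) * (-x) + C * (-x) ^ 2
        = n * x ^ 2 + 2 * -B' * x * y + A * y ^ 2 := by
      rw [← hn, hC']; ring
    exact ⟨y + t * x, -x, hval ▸ hpos, hval ▸ hle⟩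

theorem mod_seventeen_mem_iff (n : ℕ) :
    n % 17 ∈ ({3, 5, 6, 7, 10, 11, 12, 14} : Finset ℕ) ↔ ¬ IsSquare (n : ZMod 17) := by
  have key : ∀ m : Fin 17, (m : ℕ) ∈ ({3, 5, 6, 7, 10, 11, 12, 14} : Finset ℕ) ↔
      ¬ IsSquare ((m : ℕ) : ZMod 17) := by decide
  have := key ⟨n % 17, Nat.mod_lt _ (by norm_num)⟩
  simpa using this

theorem isSquare_neg_seventeen_iff {p : ℕ} [Fact p.Prime] (hodd : p ≠ 2)
    (hns : ¬ IsSquare (p : ZMod 17)) : IsSquare (-17 : ZMod p) ↔ p % 4 = 3 := by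
  have : Fact (Nat.Prime 17) := ⟨by norm_num⟩
  have h17 : legendreSym p 17 = -1 := by
    have := legendreSym.quadratic_reciprocity_one_mod_four (p := 17) (q := p) (by norm_num) hodd
    rw [Nat.cast_ofNat] at this
    rw [this, legendreSym.eq_neg_one_iff]
    simpa using hns
  have hne : ((-17 : ℤ) : ZMod p) ≠ 0 := by
    intro h0
    have : ((17 : ℤ) : ZMod p) = 0 := by
      push_cast at h0 ⊢
      linear_combination -h0
    rw [← legendreSym.eq_zero_iff] at this
    omega
  have hodd' : p % 2 = 1 := (Fact.out : p.Prime).eq_two_or_odd.resolve_left hodd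
  have hsq := legendreSym.eq_one_iff p hne
  push_cast at hsq
  rw [← hsq, show (-17 : ℤ) = -1 * 17 by norm_num, legendreSym.mul, h17,
    legendreSym.at_neg_one hodd]
  rcases Nat.odd_mod_four_iff.1 hodd' with h | h
  · simp [ZMod.χ₄_nat_one_mod_four h, h]
  · simp [ZMod.χ₄_nat_three_mod_four h, h]

theorem eq_zero_and_eq_six_of_sq_eq {W X : ℤ} (h : W ^ 2 = 17 * (36 - X ^ 2)) :
    W = 0 ∧ (X = 6 ∨ X = -6) := by
  obtain ⟨w, rfl⟩ : (17 : ℤ) ∣ W :=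
    (by norm_num : Prime (17 : ℤ)).dvd_of_dvd_pow ⟨_, h⟩
  have hw : 17 * w ^ 2 = 36 - X ^ 2 := by linarith
  have hX1 : X ≤ 6 := by nlinarith [sq_nonneg w]
  have hX2 : -6 ≤ X := by nlinarith [sq_nonneg w]
  have hw1 : w ≤ 1 := by nlinarith [sq_nonneg X]
  have hw2 : -1 ≤ w := by nlinarith [sq_nonneg X]
  interval_cases w <;> interval_cases X <;> simp_all

section Field

variable {K : Type*} [Field K] [NumberField K] {ω : K}

theorem exists_eq_add_mul (hω : ω ^ 2 = -17) (hK : Algebra.adjoin ℚ {ω} = ⊤) (z : K) :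
    ∃ u v : ℚ, z = u + v * ω := by
  have hz : z ∈ Algebra.adjoin ℚ {ω} := hK ▸ Algebra.mem_top
  induction hz using Algebra.adjoin_induction with
  | mem x hx => exact ⟨0, 1, by simpa using hx⟩
  | algebraMap r => exact ⟨r, 0, by simp⟩
  | add x y _ _ hx hy =>
    obtain ⟨u, v, rfl⟩ := hx
    obtain ⟨u', v', rfl⟩ := hy
    exact ⟨u + u', v + v', by push_cast; ring⟩
  | mul x y _ _ hx hy =>
    obtain ⟨u, v, rfl⟩ := hx
    obtain ⟨u', v', rfl⟩ := hy
    exact ⟨u * u' - 17 * v * v', u * v' + v * u', by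
      push_cast; linear_combination (v * v' : K) * hω⟩

theorem exists_basis (hω : ω ^ 2 = -17) (hK : Algebra.adjoin ℚ {ω} = ⊤) :
    ∃ b : Module.Basis (Fin 2) ℚ K, b 0 = 1 ∧ b 1 = ω := by
  have hli : LinearIndependent ℚ ![(1 : K), ω] := by
    rw [LinearIndependent.pair_iff]
    intro s t hst
    simp only [Algebra.smul_def, eq_ratCast, mul_one] at hst
    have hsq : s ^ 2 + 17 * t ^ 2 = 0 := by
      have : (s ^ 2 + 17 * t ^ 2 : K) = 0 := by
        linear_combination (s - t * ω : K) * hst + (t ^ 2 : K) * hω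
      exact_mod_cast this
    constructor <;> nlinarith [sq_nonneg s, sq_nonneg t]
  suffices hsp : ⊤ ≤ Submodule.span ℚ (Set.range ![(1 : K), ω]) from
    ⟨Module.Basis.mk hli hsp, by simp, by simp⟩
  rintro z -
  obtain ⟨u, v, rfl⟩ := exists_eq_add_mul hω hK z
  rw [Matrix.range_cons, Matrix.range_cons, Matrix.range_empty, Set.union_empty,
    Set.singleton_union, Submodule.mem_span_pair]
  exact ⟨u, v, by simp [Algebra.smul_def]⟩

theorem leftMulMatrix_add_mul (hω : ω ^ 2 = -17) {b : Module.Basis (Fin 2) ℚ K}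
    (h0 : b 0 = 1) (h1 : b 1 = ω) (u v : ℚ) :
    Algebra.leftMulMatrix b (u + v * ω) = !![u, -17 * v; v, u] := by
  have e0 : (u + v * ω) * b 0 = ∑ i, ![u, v] i • b i := by
    simp [h0, h1, Algebra.smul_def]
  have e1 : (u + v * ω) * b 1 = ∑ i, ![-17 * v, u] i • b i := by
    simp only [h0, h1, Algebra.smul_def, Fin.sum_univ_two, eq_ratCast, Matrix.cons_val_zero,
      Matrix.cons_val_one]
    push_cast
    linear_combination (v : K) * hω
  ext i j
  rw [Algebra.leftMulMatrix_eq_repr_mul]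
  fin_cases j
  · change b.repr ((u + v * ω) * b 0) i = _
    rw [e0, Module.Basis.repr_sum_self]
    fin_cases i <;> simp
  · change b.repr ((u + v * ω) * b 1) i = _
    rw [e1, Module.Basis.repr_sum_self]
    fin_cases i <;> simp

theorem norm_add_mul (hω : ω ^ 2 = -17) (hK : Algebra.adjoin ℚ {ω} = ⊤) (u v : ℚ) :
    Algebra.norm ℚ (u + v * ω) = u ^ 2 + 17 * v ^ 2 := by
  obtain ⟨b, h0, h1⟩ := exists_basis hω hK
  rw [Algebra.norm_eq_matrix_det b, leftMulMatrix_add_mul hω h0 h1, Matrix.det_fin_two_of]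
  ring

theorem trace_add_mul (hω : ω ^ 2 = -17) (hK : Algebra.adjoin ℚ {ω} = ⊤) (u v : ℚ) :
    Algebra.trace ℚ K (u + v * ω) = 2 * u := by
  obtain ⟨b, h0, h1⟩ := exists_basis hω hK
  rw [Algebra.trace_eq_matrix_trace b, leftMulMatrix_add_mul hω h0 h1, Matrix.trace_fin_two_of]
  ring

theorem norm_int_add_mul {θ : 𝓞 K} (hθ : θ ^ 2 = -17) (hK : Algebra.adjoin ℚ {(θ : K)} = ⊤)
    (x y : ℤ) : Algebra.norm ℤ (x + y * θ) = x ^ 2 + 17 * y ^ 2 := by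
  have hω : (θ : K) ^ 2 = -17 := by
    simpa [map_ofNat] using congrArg (algebraMap (𝓞 K) K) hθ
  have := norm_add_mul hω hK x y
  have h := Algebra.coe_norm_int (K := K) (x + y * θ : 𝓞 K)
  have e : ((x + y * θ : 𝓞 K) : K) = ((x : ℚ) : K) + ((y : ℚ) : K) * (θ : K) := by simp
  rw [e, this] at h
  exact_mod_cast h

/-- An algebraic integer of absolute norm `9` in `ℚ(√-17)` is `3` or `-3`. -/
theorem eq_three_or_eq_neg_three {θ : 𝓞 K} (hθ : θ ^ 2 = -17)
    (hK : Algebra.adjoin ℚ {(θ : K)} = ⊤) {β : 𝓞 K} (hβ : (Algebra.norm ℤ β).natAbs = 9) :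
    β = 3 ∨ β = -3 := by
  have hω : (θ : K) ^ 2 = -17 := by
    simpa [map_ofNat] using congrArg (algebraMap (𝓞 K) K) hθ
  obtain ⟨u, v, huv⟩ := exists_eq_add_mul hω hK (β : K)
  have hn := Algebra.coe_norm_int (K := K) β
  have ht := Algebra.coe_trace_int (K := K) β
  rw [huv, norm_add_mul hω hK] at hn
  have hnonneg : 0 ≤ Algebra.norm ℤ β := by
    have : (0 : ℚ) ≤ Algebra.norm ℤ β := hn ▸ by positivity
    exact_mod_cast this
  rw [show Algebra.norm ℤ β = 9 by omega] at hn
  rw [huv, trace_add_mul hω hK] at ht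
  push_cast at hn
  set X := Algebra.trace ℤ (𝓞 K) β
  have hsq : ((34 * v) ^ 2 : ℚ) = ((17 * (36 - X ^ 2) : ℤ) : ℚ) := by
    push_cast
    rw [ht]
    linear_combination -68 * hn
  obtain ⟨W, hW⟩ : ∃ W : ℤ, (W : ℚ) = 34 * v := by
    have hvint : IsIntegral ℤ (34 * v) := by
      refine IsIntegral.of_pow (n := 2) (by norm_num) ?_
      rw [hsq]
      exact isIntegral_algebraMap (x := (17 * (36 - X ^ 2) : ℤ))
    obtain ⟨W, hW⟩ := IsIntegrallyClosed.isIntegral_iff.1 hvint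
    exact ⟨W, by simpa using hW⟩
  rw [← hW] at hsq
  have hsq' : W ^ 2 = 17 * (36 - X ^ 2) := by exact_mod_cast hsq
  have hWX := eq_zero_and_eq_six_of_sq_eq hsq'
  have hv : v = 0 := by
    rw [hWX.1] at hW
    push_cast at hW
    linarith
  rcases hWX.2 with h | h
  · left
    have hu : u = 3 := by rw [h] at ht; push_cast at ht; linarith
    apply RingOfIntegers.coe_injective
    simp [huv, hu, hv, map_ofNat]
  · right
    have hu : u = -3 := by rw [h] at ht; push_cast at ht; linarith
    apply RingOfIntegers.coe_injective
    simp [huv, hu, hv, map_ofNat]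

/-- Ideals of equal nonzero norm, one inside the other, coincide. -/
theorem eq_of_le_of_absNorm_eq {I J : Ideal (𝓞 K)} (hle : I ≤ J)
    (hN : Ideal.absNorm I = Ideal.absNorm J) (h0 : Ideal.absNorm J ≠ 0) : I = J := by
  obtain ⟨L, rfl⟩ := Ideal.dvd_iff_le.2 hle
  rw [map_mul] at hN
  have hL : Ideal.absNorm L = 1 :=
    Nat.eq_of_mul_eq_mul_left (Nat.pos_of_ne_zero h0) (by rw [hN, mul_one])
  rw [Ideal.absNorm_eq_one_iff.1 hL, Ideal.mul_top]

theorem absNorm_span_add_mul {θ : 𝓞 K} (hθ : θ ^ 2 = -17)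
    (hK : Algebra.adjoin ℚ {(θ : K)} = ⊤) (x y : ℤ) :
    (Ideal.absNorm (Ideal.span {(x + y * θ : 𝓞 K)}) : ℤ) = x ^ 2 + 17 * y ^ 2 := by
  rw [Ideal.absNorm_span_singleton, norm_int_add_mul hθ hK, Int.natAbs_of_nonneg (by positivity)]

theorem absNorm_span_intCast {θ : 𝓞 K} (hθ : θ ^ 2 = -17)
    (hK : Algebra.adjoin ℚ {(θ : K)} = ⊤) (x : ℤ) :
    (Ideal.absNorm (Ideal.span {(x : 𝓞 K)}) : ℤ) = x ^ 2 := by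
  simpa using absNorm_span_add_mul hθ hK x 0

theorem mk0_pow_eq_one_of_eq_span {Q : Ideal (𝓞 K)} (hQ0 : Q ∈ (Ideal (𝓞 K))⁰) {n : ℕ}
    {β : 𝓞 K} (h : Q ^ n = Ideal.span {β}) :
    ClassGroup.mk0 ⟨Q, hQ0⟩ ^ n = 1 := by
  rw [← map_pow]
  exact (ClassGroup.mk0_eq_one_iff (pow_mem hQ0 n)).2 ⟨β, h⟩

theorem mk0_sq_eq_one_of_absNorm_eq_two {θ : 𝓞 K} (hθ : θ ^ 2 = -17)
    (hK : Algebra.adjoin ℚ {(θ : K)} = ⊤) {Q : Ideal (𝓞 K)} (hQ0 : Q ∈ (Ideal (𝓞 K))⁰)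
    (hN : Ideal.absNorm Q = 2) : ClassGroup.mk0 ⟨Q, hQ0⟩ ^ 2 = 1 := by
  have hQ : Q.IsPrime := Ideal.isPrime_of_irreducible_absNorm (hN ▸ Nat.prime_two)
  have h2 : (2 : 𝓞 K) ∈ Q := by simpa [hN] using Ideal.absNorm_mem Q
  have h1 : 1 + θ ∈ Q := by
    refine hQ.mem_of_pow_mem 2 ?_
    have : (1 + θ) ^ 2 = (θ - 8) * 2 := by linear_combination hθ
    exact this ▸ Q.mul_mem_left _ h2
  have h2sq : (2 : 𝓞 K) ∈ Q ^ 2 := by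
    have : (2 : 𝓞 K) = (1 + θ) * 2 - (1 + θ) ^ 2 - 4 * 2 ^ 2 := by linear_combination hθ
    rw [this]
    have hmul : (1 + θ) * 2 ∈ Q ^ 2 := sq Q ▸ Ideal.mul_mem_mul h1 h2
    exact sub_mem (sub_mem hmul (Ideal.pow_mem_pow h1 2))
      (Ideal.mul_mem_left _ _ (Ideal.pow_mem_pow h2 2))
  refine mk0_pow_eq_one_of_eq_span hQ0 (β := 2)
    (eq_of_le_of_absNorm_eq ((Ideal.span_singleton_le_iff_mem _).2 h2sq) ?_ ?_).symm
  · have := absNorm_span_intCast hθ hK 2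
    rw [map_pow, hN]
    exact_mod_cast this
  · rw [map_pow, hN]; norm_num

theorem orderOf_mk0_of_absNorm_eq_three_of_mem {θ : 𝓞 K} (hθ : θ ^ 2 = -17)
    (hK : Algebra.adjoin ℚ {(θ : K)} = ⊤) {Q : Ideal (𝓞 K)} (hQ0 : Q ∈ (Ideal (𝓞 K))⁰)
    (hN : Ideal.absNorm Q = 3) (h1 : 1 + θ ∈ Q) : orderOf (ClassGroup.mk0 ⟨Q, hQ0⟩) = 4 := by
  have h3 : (3 : 𝓞 K) ∈ Q := by simpa [hN] using Ideal.absNorm_mem Q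
  have hsq : 8 - θ ∈ Q ^ 2 := by
    have : 8 - θ = (8 - θ) * 3 ^ 2 + 4 * (1 + θ) ^ 2 := by linear_combination -4 * hθ
    rw [this]
    exact add_mem (Ideal.mul_mem_left _ _ (Ideal.pow_mem_pow h3 2))
      (Ideal.mul_mem_left _ _ (Ideal.pow_mem_pow h1 2))
  have hfourth : 8 - θ ∈ Q ^ 4 := by
    have : 8 - θ = (8 - θ) * 3 ^ 4 - 5 * (8 - θ) ^ 2 - 5 * 3 ^ 4 := by
      linear_combination 5 * hθ
    rw [this]
    have hpow : (8 - θ) ^ 2 ∈ Q ^ 4 := by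
      rw [show 4 = 2 * 2 by norm_num, pow_mul Q]
      exact Ideal.pow_mem_pow hsq 2
    exact sub_mem (sub_mem (Ideal.mul_mem_left _ _ (Ideal.pow_mem_pow h3 4))
      (Ideal.mul_mem_left _ _ hpow)) (Ideal.mul_mem_left _ _ (Ideal.pow_mem_pow h3 4))
  have hpow4 : Q ^ 4 = Ideal.span {8 - θ} := by
    refine (eq_of_le_of_absNorm_eq ((Ideal.span_singleton_le_iff_mem _).2 hfourth) ?_ ?_).symm
    · have := absNorm_span_add_mul hθ hK 8 (-1)
      rw [show ((8 : ℤ) : 𝓞 K) + ((-1 : ℤ) : 𝓞 K) * θ = 8 - θ by push_cast; ring] at this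
      rw [map_pow, hN]
      refine Nat.cast_injective (R := ℤ) ?_
      rw [this]
      norm_num
    · rw [map_pow, hN]; norm_num
  refine orderOf_eq_prime_pow (p := 2) (n := 1) ?_ (mk0_pow_eq_one_of_eq_span hQ0 hpow4)
  rw [pow_one, ← map_pow]
  intro h
  obtain ⟨β, hβ⟩ := (ClassGroup.mk0_eq_one_iff (pow_mem hQ0 2)).1 h
  have hβ' : Q ^ 2 = Ideal.span {β} := hβ
  have hQ3 : Q ^ 2 = Ideal.span {3} := by
    have hnorm : (Algebra.norm ℤ β).natAbs = 9 := by
      rw [← Ideal.absNorm_span_singleton, ← hβ', map_pow, hN]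
      norm_num
    rcases eq_three_or_eq_neg_three hθ hK hnorm with rfl | rfl
    · exact hβ'
    · rw [hβ', Ideal.span_singleton_neg]
  have hmem : ((11 : ℤ) + (-1 : ℤ) * θ : 𝓞 K) ∈ Q ^ 2 := by
    rw [show ((11 : ℤ) + (-1 : ℤ) * θ : 𝓞 K) = (8 - θ) + 3 by push_cast; ring]
    exact add_mem hsq (hQ3 ▸ Ideal.mem_span_singleton_self 3)
  have hdvd := Ideal.absNorm_dvd_norm_of_mem hmem
  rw [norm_int_add_mul hθ hK, map_pow, hN] at hdvd
  norm_num at hdvd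

theorem orderOf_mk0_of_absNorm_eq_three {θ : 𝓞 K} (hθ : θ ^ 2 = -17)
    (hK : Algebra.adjoin ℚ {(θ : K)} = ⊤) {Q : Ideal (𝓞 K)} (hQ0 : Q ∈ (Ideal (𝓞 K))⁰)
    (hN : Ideal.absNorm Q = 3) : orderOf (ClassGroup.mk0 ⟨Q, hQ0⟩) = 4 := by
  have hQ : Q.IsPrime := Ideal.isPrime_of_irreducible_absNorm (hN ▸ Nat.prime_three)
  have h3 : (3 : 𝓞 K) ∈ Q := by simpa [hN] using Ideal.absNorm_mem Q
  have hprod : (1 + θ) * (1 + -θ) ∈ Q := by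
    rw [show (1 + θ) * (1 + -θ) = 6 * 3 by linear_combination -hθ]
    exact Q.mul_mem_left _ h3
  rcases hQ.mem_or_mem hprod with h | h
  · exact orderOf_mk0_of_absNorm_eq_three_of_mem hθ hK hQ0 hN h
  · refine orderOf_mk0_of_absNorm_eq_three_of_mem (θ := -θ) (by rw [neg_sq, hθ]) ?_ hQ0 hN h
    rw [eq_top_iff, ← hK]
    refine Algebra.adjoin_le ?_
    rintro _ rfl
    have : -((-θ : 𝓞 K) : K) ∈ Algebra.adjoin ℚ {((-θ : 𝓞 K) : K)} :=
      neg_mem (Algebra.self_mem_adjoin_singleton ℚ _)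
    simpa using this

theorem exists_intCast_add_mem {θ : 𝓞 K} (hθ : θ ^ 2 = -17) {p : ℕ} {P : Ideal (𝓞 K)}
    (hP : P.IsPrime) (hpP : (p : 𝓞 K) ∈ P) (hs : IsSquare (-17 : ZMod p)) :
    ∃ a : ℤ, (p : ℤ) ∣ a ^ 2 + 17 ∧ (a + θ : 𝓞 K) ∈ P := by
  obtain ⟨r, hr⟩ := hs
  obtain ⟨a, rfl⟩ := ZMod.intCast_surjective r
  have hdvd : (p : ℤ) ∣ a ^ 2 + 17 := by
    rw [← ZMod.intCast_zmod_eq_zero_iff_dvd]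
    push_cast
    linear_combination -hr
  have hprod : (a + θ) * (a - θ) ∈ P := by
    obtain ⟨c, hc⟩ := hdvd
    have hc' : (a ^ 2 + 17 : 𝓞 K) = p * c := by exact_mod_cast congrArg (Int.cast (R := 𝓞 K)) hc
    rw [show (a + θ) * (a - θ) = c * p by linear_combination hc' - hθ]
    exact P.mul_mem_left _ hpP
  rcases hP.mem_or_mem hprod with h | h
  · exact ⟨a, hdvd, h⟩
  · refine ⟨-a, by simpa using hdvd, ?_⟩
    have := P.neg_mem h
    rwa [neg_sub, sub_eq_neg_add, ← Int.cast_neg] at this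

/-- A prime above `p` at which `-17` becomes a square contains an element whose norm is
`p`, `2 p` or `3 p`. -/
theorem exists_mem_of_norm_eq_mul {θ : 𝓞 K} (hθ : θ ^ 2 = -17) {p : ℕ} (hp : p.Prime)
    (hodd : p ≠ 2) {P : Ideal (𝓞 K)} (hP : P.IsPrime) (hpP : (p : 𝓞 K) ∈ P)
    (hs : IsSquare (-17 : ZMod p)) :
    ∃ x y : ℤ, ∃ k : ℕ, (x + y * θ : 𝓞 K) ∈ P ∧ x ^ 2 + 17 * y ^ 2 = k * p ∧
      (k = 1 ∨ k = 2 ∨ k = 3) := by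
  obtain ⟨a, ha, haP⟩ := exists_intCast_add_mem hθ hP hpP hs
  obtain ⟨c, hc⟩ := ha
  obtain ⟨x, y, hpos, hle⟩ := exists_form_value_le_four p a c hp.pos (by linarith)
  obtain ⟨k, hk⟩ := Int.eq_ofNat_of_zero_le hpos.le
  have hnorm : (p * x + a * y) ^ 2 + 17 * y ^ 2 = k * p := by
    rw [← hk]
    linear_combination y ^ 2 * hc
  have hmem : (((p * x + a * y : ℤ) : 𝓞 K) + (y : 𝓞 K) * θ) ∈ P := by
    rw [show ((p * x + a * y : ℤ) : 𝓞 K) + (y : 𝓞 K) * θ = x * p + y * (a + θ) by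
      push_cast; ring]
    exact add_mem (P.mul_mem_left _ hpP) (P.mul_mem_left _ haP)
  rcases (by omega : k = 4 ∨ k = 1 ∨ k = 2 ∨ k = 3) with rfl | hk'
  · generalize (p * x + a * y : ℤ) = X at hnorm hmem
    obtain ⟨⟨X', rfl⟩, ⟨Y', rfl⟩⟩ : (2 : ℤ) ∣ X ∧ (2 : ℤ) ∣ y := by
      have h4 : (4 : ℤ) ∣ X ^ 2 + 17 * y ^ 2 := ⟨p, by exact_mod_cast hnorm⟩
      rcases Int.even_or_odd' X with ⟨m, rfl | rfl⟩ <;>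
        rcases Int.even_or_odd' y with ⟨n, rfl | rfl⟩ <;> ring_nf at h4 <;> omega
    have h2 : (2 : 𝓞 K) ∉ P := by
      intro h2
      refine hP.ne_top ((Ideal.eq_top_iff_one _).2 ?_)
      obtain ⟨m, hm⟩ := (hp.eq_two_or_odd'.resolve_left hodd)
      have : (1 : 𝓞 K) = p - m * 2 := by rw [hm]; push_cast; ring
      exact this ▸ sub_mem hpP (P.mul_mem_left _ h2)
    refine ⟨X', Y', 1, ?_, ?_, Or.inl rfl⟩
    · refine (hP.mem_or_mem (x := 2) ?_).resolve_left h2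
      convert hmem using 1
      push_cast
      ring
    · push_cast at hnorm ⊢
      linarith
  · exact ⟨_, y, k, hmem, hnorm, hk'⟩

/-- The class of `P` is inverse to that of an ideal of norm `k`. -/
theorem exists_mk0_mul_eq_one {θ : 𝓞 K} (hθ : θ ^ 2 = -17)
    (hK : Algebra.adjoin ℚ {(θ : K)} = ⊤) {p k : ℕ} (hp : 0 < p) (hk : 0 < k)
    {P : Ideal (𝓞 K)} (hP0 : P ∈ (Ideal (𝓞 K))⁰) (hN : Ideal.absNorm P = p) {x y : ℤ}
    (hmem : (x + y * θ : 𝓞 K) ∈ P) (hxy : x ^ 2 + 17 * y ^ 2 = k * p) :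
    ∃ (Q : Ideal (𝓞 K)) (hQ0 : Q ∈ (Ideal (𝓞 K))⁰), Ideal.absNorm Q = k ∧
      ClassGroup.mk0 ⟨P, hP0⟩ * ClassGroup.mk0 ⟨Q, hQ0⟩ = 1 := by
  obtain ⟨Q, hQ⟩ := Ideal.dvd_span_singleton.2 hmem
  have hnorm := absNorm_span_add_mul hθ hK x y
  rw [hQ, map_mul, hN, hxy] at hnorm
  have hQk : Ideal.absNorm Q = k := by
    have : p * Ideal.absNorm Q = k * p := by exact_mod_cast hnorm
    exact Nat.eq_of_mul_eq_mul_left hp (by rw [this, mul_comm])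
  have hQ0 : Q ∈ (Ideal (𝓞 K))⁰ :=
    Ideal.absNorm_ne_zero_iff_mem_nonZeroDivisors.1 (by omega)
  refine ⟨Q, hQ0, hQk, ?_⟩
  rw [← map_mul]
  exact (ClassGroup.mk0_eq_one_iff (mul_mem hP0 hQ0)).2 ⟨_, hQ.symm⟩

/-- A prime above `p` other than `(p)` has norm `p`. -/
theorem absNorm_eq_of_ne_span {θ : 𝓞 K} (hθ : θ ^ 2 = -17)
    (hK : Algebra.adjoin ℚ {(θ : K)} = ⊤) {p : ℕ} (hp : p.Prime) {P : Ideal (𝓞 K)}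
    (hP : P.IsPrime) (hpP : (p : 𝓞 K) ∈ P) (hne : P ≠ Ideal.span {(p : 𝓞 K)}) :
    Ideal.absNorm P = p := by
  have hle : Ideal.span {(p : 𝓞 K)} ≤ P := (Ideal.span_singleton_le_iff_mem _).2 hpP
  have hspan : Ideal.absNorm (Ideal.span {(p : 𝓞 K)}) = p ^ 2 := by
    exact_mod_cast absNorm_span_intCast hθ hK p
  have hdvd := Ideal.absNorm_dvd_absNorm_of_le hle
  rw [hspan, Nat.dvd_prime_pow hp] at hdvd
  obtain ⟨i, hi, hPi⟩ := hdvd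
  interval_cases i
  · exact absurd (Ideal.absNorm_eq_one_iff.1 (by simpa using hPi)) hP.ne_top
  · simpa using hPi
  · exact absurd (eq_of_le_of_absNorm_eq hle (by rw [hspan, hPi])
      (by rw [hPi]; exact pow_ne_zero _ hp.ne_zero)).symm hne

theorem ne_span_of_isSquare {θ : 𝓞 K} (hθ : θ ^ 2 = -17)
    (hK : Algebra.adjoin ℚ {(θ : K)} = ⊤) {p : ℕ} (hp : p.Prime) (hodd : p ≠ 2) (h17 : p ≠ 17)
    {P : Ideal (𝓞 K)} (hP : P.IsPrime) (hpP : (p : 𝓞 K) ∈ P) (hs : IsSquare (-17 : ZMod p)) :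
    P ≠ Ideal.span {(p : 𝓞 K)} := by
  intro hspan
  obtain ⟨a, ha, haP⟩ := exists_intCast_add_mem hθ hP hpP hs
  have hsq_dvd : ∀ b : ℤ, (b + θ : 𝓞 K) ∈ P → (p : ℤ) ^ 2 ∣ b ^ 2 + 17 := by
    intro b hb
    have := Ideal.absNorm_dvd_norm_of_mem (x := (b + (1 : ℤ) * θ : 𝓞 K)) (by simpa using hb)
    rw [norm_int_add_mul hθ hK, hspan] at this
    have hp2 := absNorm_span_intCast hθ hK p
    rw [Int.cast_natCast] at hp2
    rw [hp2] at this
    simpa using this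
  have hmem : ((a + p : ℤ) + θ : 𝓞 K) ∈ P := by
    rw [show ((a + p : ℤ) + θ : 𝓞 K) = (a + θ) + p by push_cast; ring]
    exact add_mem haP hpP
  have hpZ : Prime (p : ℤ) := Nat.prime_iff_prime_int.1 hp
  have hdvd : (p : ℤ) ∣ 2 * a := by
    obtain ⟨c, hc⟩ := hsq_dvd a haP
    obtain ⟨d, hd⟩ := hsq_dvd _ hmem
    refine ⟨d - c - 1, ?_⟩
    have : (p : ℤ) ≠ 0 := hpZ.ne_zero
    apply mul_left_cancel₀ this
    linear_combination hd - hc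
  rcases hpZ.dvd_or_dvd hdvd with h | h
  · exact hodd ((Nat.prime_dvd_prime_iff_eq hp Nat.prime_two).1 (by exact_mod_cast h))
  · have h' : (p : ℤ) ∣ 17 := (Int.dvd_add_right (dvd_pow h two_ne_zero)).1 ha
    exact h17 ((Nat.prime_dvd_prime_iff_eq hp (by norm_num)).1 (by exact_mod_cast h'))

theorem isSquare_of_absNorm_eq {θ : 𝓞 K} (hθ : θ ^ 2 = -17) {p : ℕ} (hp : p.Prime)
    {P : Ideal (𝓞 K)} (hN : Ideal.absNorm P = p) : IsSquare (-17 : ZMod p) := by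
  have hcard : Nat.card (𝓞 K ⧸ P) = p := by
    rw [← hN, Ideal.absNorm_apply, Submodule.cardQuot_apply]
  have : Finite (𝓞 K ⧸ P) := Nat.finite_of_card_ne_zero (by rw [hcard]; exact hp.ne_zero)
  have := Fintype.ofFinite (𝓞 K ⧸ P)
  let e : ZMod p ≃+* 𝓞 K ⧸ P :=
    ZMod.ringEquivOfPrime _ hp (by rw [← Nat.card_eq_fintype_card, hcard])
  refine ⟨e.symm (Ideal.Quotient.mk P θ), e.injective ?_⟩
  rw [map_mul, e.apply_symm_apply, ← map_mul, ← sq, hθ]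
  simp [map_ofNat]

end Field

end SqrtNegSeventeen

open SqrtNegSeventeen in
/-- For an odd prime `p ≠ 17`, there is a prime of `𝓞_K` above `p` (for `K = ℚ(√−17)`) whose
ideal class has order `4` in `Cl(K)` iff `p ≡ 3 (mod 4)` and
`p mod 17 ∈ {3, 5, 6, 7, 10, 11, 12, 14}`. -/
theorem exists_prime_above_with_class_of_order_four_iff
    (K : Type*) [Field K] [NumberField K] (ω : K)
    (hω : ω ^ 2 = -17) (hK : Algebra.adjoin ℚ {ω} = ⊤)
    (p : ℕ) (hp : p.Prime) (hodd : p ≠ 2) (h17 : p ≠ 17) :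
    (∃ (P : Ideal (𝓞 K)) (hP0 : P ∈ (Ideal (𝓞 K))⁰), P.IsPrime ∧ (p : 𝓞 K) ∈ P ∧
        orderOf (ClassGroup.mk0 ⟨P, hP0⟩) = 4) ↔
      (p % 4 = 3 ∧ p % 17 ∈ ({3, 5, 6, 7, 10, 11, 12, 14} : Finset ℕ)) := by
  have : Fact p.Prime := ⟨hp⟩
  obtain ⟨θ, rfl⟩ : ∃ θ : 𝓞 K, (θ : K) = ω := by
    refine ⟨⟨ω, IsIntegral.of_pow (n := 2) (by norm_num) ?_⟩, rfl⟩
    rw [hω]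
    exact_mod_cast isIntegral_algebraMap (R := ℤ) (A := K) (x := -17)
  have hθ : θ ^ 2 = -17 := RingOfIntegers.coe_injective (by simpa [map_ofNat] using hω)
  rw [mod_seventeen_mem_iff]
  constructor
  · rintro ⟨P, hP0, hP, hpP, hord⟩
    have hN : Ideal.absNorm P = p := by
      refine absNorm_eq_of_ne_span hθ hK hp hP hpP fun h ↦ ?_
      have h1 := (ClassGroup.mk0_eq_one_iff hP0).2 ⟨_, h⟩
      rw [h1, orderOf_one] at hord
      omega
    have hs := isSquare_of_absNorm_eq hθ hp hN
    obtain ⟨x, y, k, hmem, hxy, hk⟩ := exists_mem_of_norm_eq_mul hθ hp hodd hP hpP hs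
    obtain ⟨Q, hQ0, hQN, hPQ⟩ :=
      exists_mk0_mul_eq_one hθ hK hp.pos (by omega) hP0 hN hmem hxy
    rw [eq_inv_of_mul_eq_one_left hPQ, orderOf_inv] at hord
    have hns : ¬ IsSquare (p : ZMod 17) := by
      rcases hk with rfl | rfl | rfl
      · rw [Ideal.absNorm_eq_one_iff] at hQN
        have h1 := (ClassGroup.mk0_eq_one_iff hQ0).2 (hQN ▸ top_isPrincipal)
        rw [h1, orderOf_one] at hord
        omega
      · have := orderOf_dvd_of_pow_eq_one (mk0_sq_eq_one_of_absNorm_eq_two hθ hK hQ0 hQN)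
        rw [hord] at this
        omega
      · intro hsq
        have h0 : (p : ZMod 17) ≠ 0 := by
          rw [Ne, ZMod.natCast_eq_zero_iff, Nat.prime_dvd_prime_iff_eq (by norm_num) hp]
          exact h17.symm
        have hcast : (x : ZMod 17) ^ 2 = 3 * p := by
          have := congrArg (Int.cast (R := ZMod 17)) hxy
          push_cast at this
          rwa [show (17 : ZMod 17) = 0 by decide, zero_mul, add_zero] at this
        have key : ∀ s t : ZMod 17, s ≠ 0 → IsSquare s → t ^ 2 ≠ 3 * s := by decide
        exact key _ _ h0 hsq hcast
    exact ⟨(isSquare_neg_seventeen_iff hodd hns).1 hs, hns⟩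
  · rintro ⟨h4, hns⟩
    have hs := (isSquare_neg_seventeen_iff hodd hns).2 h4
    obtain ⟨P, hP, hle⟩ := Ideal.exists_le_maximal (Ideal.span {(p : 𝓞 K)}) (by
      rw [Ne, ← Ideal.absNorm_eq_one_iff]
      have := absNorm_span_intCast hθ hK p
      rw [Int.cast_natCast] at this
      intro h
      rw [h] at this
      have h2 : (2 : ℤ) ≤ p := by exact_mod_cast hp.two_le
      push_cast at this
      nlinarith)
    have hpP : (p : 𝓞 K) ∈ P := (Ideal.span_singleton_le_iff_mem _).1 hle
    have hN : Ideal.absNorm P = p := absNorm_eq_of_ne_span hθ hK hp hP.isPrime hpP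
      (ne_span_of_isSquare hθ hK hp hodd h17 hP.isPrime hpP hs)
    have hP0 : P ∈ (Ideal (𝓞 K))⁰ :=
      Ideal.absNorm_ne_zero_iff_mem_nonZeroDivisors.1 (hN ▸ hp.ne_zero)
    obtain ⟨x, y, k, hmem, hxy, hk⟩ := exists_mem_of_norm_eq_mul hθ hp hodd hP.isPrime hpP hs
    obtain ⟨Q, hQ0, hQN, hPQ⟩ :=
      exists_mk0_mul_eq_one hθ hK hp.pos (by omega) hP0 hN hmem hxy
    refine ⟨P, hP0, hP.isPrime, hpP, ?_⟩
    rw [eq_inv_of_mul_eq_one_left hPQ, orderOf_inv]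
    have hcast : (x : ZMod 17) ^ 2 = k * p := by
      have := congrArg (Int.cast (R := ZMod 17)) hxy
      push_cast at this
      rwa [show (17 : ZMod 17) = 0 by decide, zero_mul, add_zero] at this
    rcases hk with rfl | rfl | rfl
    · exact absurd ⟨(x : ZMod 17), by linear_combination -hcast⟩ hns
    · have key : ∀ s t : ZMod 17, t ^ 2 = 2 * s → IsSquare s := by decide
      exact absurd (key _ _ hcast) hns
    · exact orderOf_mk0_of_absNorm_eq_three hθ hK hQ0 hQN
end
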